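/- arXiv:0902.3203 — 3 statements merged into one kernel-verified Lean document; each statement's English description precedes it below -/
import Mathlib

section
/- Let f be a holomorphic function on an open neighborhood of 0 in ℂ², not identically zero near 0, and suppose the vanishing order of f at 0 equals k ≥ 1. Then for every real number c with 0 < c < 1/k, the function z ↦ |f(z)|^{-2c} is integrable on some open neighborhood of 0 with respect to Lebesgue measure on ℂ² ≅ ℝ⁴. In particular the complex singularity exponent of f at 0 satisfies c₀(f) ≥ 1/k. (Lower bound of Lemma 4.3.) -/
open MeasureTheory

/-!
Since the `k`-th derivative of `f` at `p` is nonzero, `f` vanishes to some order `m ≤ k` at `p`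
along some complex line through `p`, say of direction `v`. By a quantitative form of Hurwitz's
theorem, on every nearby parallel line `|f (z + w • v)|` is at least a constant times a product
`∏ i, |w - a i|` of `m` factors, the constant being independent of the line. Because
`2 * c * m < 2`, the function `∏ i, |w - a i| ^ (-2 * c)` is integrable near `0` in `ℂ`, with a
bound independent of the `a i`; integrating this bound over the parallel lines finishes the proof.
-/

open Metric Filter Topology

section Analyticity

open scoped ContDiff

variable {E G : Type*} [NormedAddCommGroup E] [NormedSpace ℂ E]
  [NormedAddCommGroup G] [NormedSpace ℂ G] {f : E → G} {U : Set E} {z : E} {r M : ℝ}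

theorem norm_fderiv_le_of_forall_mem_ball_norm_le (hr : 0 < r)
    (hf : DifferentiableOn ℂ f (ball z r)) (hM : ∀ x ∈ ball z r, ‖f x‖ ≤ M) :
    ‖fderiv ℂ f z‖ ≤ 2 * M / r := by
  refine Complex.norm_fderiv_le_div_of_mapsTo_ball hf (fun x hx ↦ ?_) hr
  rw [mem_closedBall, dist_eq_norm]
  linarith [norm_sub_le (f x) (f z), hM x hx, hM z (mem_ball_self hr)]

theorem exists_eventually_norm_fderiv_le (hU : IsOpen U) (hf : DifferentiableOn ℂ f U)
    (hz : z ∈ U) : ∃ C, ∀ᶠ x in 𝓝 z, x ∈ U ∧ ‖fderiv ℂ f x‖ ≤ C := by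
  have hbdd : ∀ᶠ x in 𝓝 z, x ∈ U ∧ ‖f x‖ < ‖f z‖ + 1 :=
    (hU.eventually_mem hz).and <|
      (hf.continuousOn.continuousAt (hU.mem_nhds hz)).norm.eventually_lt_const (lt_add_one _)
  obtain ⟨r, hr, hball⟩ := Metric.eventually_nhds_iff_ball.mp hbdd
  refine ⟨2 * (‖f z‖ + 1) / (r / 2), ?_⟩
  filter_upwards [ball_mem_nhds z (half_pos hr)] with x hx
  have hsub : ball x (r / 2) ⊆ ball z r :=
    ball_subset_ball' (by linarith [mem_ball.mp hx])
  exact ⟨(hball x (hsub (mem_ball_self (half_pos hr)))).1,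
    norm_fderiv_le_of_forall_mem_ball_norm_le (half_pos hr)
      (hf.mono fun y hy ↦ (hball y (hsub hy)).1) fun y hy ↦ (hball y (hsub hy)).2.le⟩

theorem deriv_comp_add_smul {v : E} (hf : DifferentiableAt ℂ f z) :
    deriv (fun w : ℂ ↦ f (z + w • v)) 0 = fderiv ℂ f z v := by
  have hline : HasDerivAt (fun w : ℂ ↦ z + w • v) v 0 := by
    simpa using ((hasDerivAt_id (0 : ℂ)).smul_const v).const_add z
  exact (HasFDerivAt.comp_hasDerivAt (x := (0 : ℂ)) (f := fun w : ℂ ↦ z + w • v) (l := f)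
    (by simpa using hf.hasFDerivAt) hline).deriv

theorem isBigO_fderiv_of_isBigO_norm_sub_pow_succ {p : E} {n : ℕ}
    (hf : ∀ᶠ z in 𝓝 p, DifferentiableAt ℂ f z)
    (hfO : f =O[𝓝 p] fun z ↦ ‖z - p‖ ^ (n + 1)) :
    fderiv ℂ f =O[𝓝 p] fun z ↦ ‖z - p‖ ^ n := by
  obtain ⟨C, hC, hbound⟩ := hfO.exists_pos
  obtain ⟨r, hr, hball⟩ := Metric.eventually_nhds_iff_ball.mp (hf.and hbound.bound)
  refine .of_bound (2 * C * 2 ^ (n + 1)) ?_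
  filter_upwards [ball_mem_nhds p (half_pos hr)] with z hz
  rw [mem_ball, dist_eq_norm] at hz
  -- apply the Cauchy estimate on `ball z ρ` and let `ρ` decrease to `‖z - p‖`
  have hlim : Tendsto (fun ρ : ℝ ↦ 2 * C * 2 ^ (n + 1) * ρ ^ n) (𝓝[>] ‖z - p‖)
      (𝓝 (2 * C * 2 ^ (n + 1) * ‖z - p‖ ^ n)) :=
    tendsto_nhdsWithin_of_tendsto_nhds (Continuous.tendsto (by fun_prop) _)
  rw [norm_pow, norm_norm]
  refine ge_of_tendsto hlim ?_
  filter_upwards [Ioo_mem_nhdsGT hz] with ρ hρ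
  have hρ0 : 0 < ρ := (norm_nonneg _).trans_lt hρ.1
  have hsub : ∀ x ∈ ball z ρ, ‖x - p‖ ≤ 2 * ρ := fun x hx ↦ by
    rw [mem_ball, dist_eq_norm] at hx
    linarith [norm_sub_le_norm_sub_add_norm_sub x z p, hρ.1]
  have hmem : ∀ x ∈ ball z ρ, x ∈ ball p r := fun x hx ↦ by
    rw [mem_ball, dist_eq_norm]
    linarith [hsub x hx, hρ.2, norm_sub_le_norm_sub_add_norm_sub x z p, mem_ball_iff_norm.mp hx]
  calc ‖fderiv ℂ f z‖ ≤ 2 * (C * (2 * ρ) ^ (n + 1)) / ρ := by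
        refine norm_fderiv_le_of_forall_mem_ball_norm_le hρ0
          (fun x hx ↦ (hball x (hmem x hx)).1.differentiableWithinAt) fun x hx ↦ ?_
        refine (hball x (hmem x hx)).2.trans ?_
        rw [norm_pow, norm_norm]
        gcongr
        exact hsub x hx
    _ = 2 * C * 2 ^ (n + 1) * ρ ^ n := by field_simp; ring

variable [FiniteDimensional ℂ E] [CompleteSpace G] [SecondCountableTopology G]

theorem differentiableAt_circleIntegral_smul_comp_add {γ : ℂ → ℂ} {R C : ℝ} {v : E} (hR : 0 ≤ R)
    (hγ : ContinuousOn γ (sphere 0 R)) (hU : IsOpen U) (hf : DifferentiableOn ℂ f U)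
    (hC : ∀ᶠ x in 𝓝 z, ∀ ζ ∈ sphere (0 : ℂ) R, x + ζ • v ∈ U ∧ ‖fderiv ℂ f (x + ζ • v)‖ ≤ C) :
    DifferentiableAt ℂ (fun x ↦ ∮ ζ in C(0, R), γ ζ • f (x + ζ • v)) z := by
  borelize E
  set ζ : ℝ → ℂ := circleMap 0 R
  have hζ θ : ζ θ ∈ sphere (0 : ℂ) R := circleMap_mem_sphere 0 hR θ
  set g : ℝ → ℂ := fun θ ↦ deriv (circleMap 0 R) θ * γ (ζ θ)
  have hg : Continuous g := by
    have hγζ := hγ.comp_continuous (continuous_circleMap 0 R) hζ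
    simp only [g, deriv_circleMap]
    exact ((continuous_circleMap 0 R).mul continuous_const).mul hγζ
  have hF x (hx : ∀ ζ ∈ sphere (0 : ℂ) R, x + ζ • v ∈ U ∧ ‖fderiv ℂ f (x + ζ • v)‖ ≤ C) :
      Continuous fun θ ↦ g θ • f (x + ζ θ • v) :=
    hg.smul (hf.continuousOn.comp_continuous (by fun_prop) fun θ ↦ (hx _ (hζ θ)).1)
  have hF' : Measurable fun θ ↦ g θ • fderiv ℂ f (z + ζ θ • v) :=
    hg.measurable.smul ((measurable_fderiv ℂ f).comp (by fun_prop))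
  simp only [circleIntegral, smul_smul]
  simp only [intervalIntegral.integral_of_le Real.two_pi_pos.le]
  refine (hasFDerivAt_integral_of_dominated_of_fderiv_le (𝕜 := ℂ) (bound := fun θ ↦ ‖g θ‖ * C)
    (F' := fun x θ ↦ g θ • fderiv ℂ f (x + ζ θ • v)) hC ?_ ?_ ?_ ?_ ?_ ?_).differentiableAt
  · exact hC.mono fun x hx ↦ (hF x hx).aestronglyMeasurable
  · exact (hF z hC.self_of_nhds).integrableOn_Ioc
  · exact hF'.aestronglyMeasurable
  · refine .of_forall fun θ x hx ↦ ?_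
    rw [norm_smul]
    gcongr
    exact (hx _ (hζ θ)).2
  · exact (hg.norm.mul continuous_const).integrableOn_Ioc
  · refine .of_forall fun θ x hx ↦ .const_smul ?_ _
    exact (hasFDerivAt_comp_add_right _).mpr
      (hf.differentiableAt (hU.mem_nhds (hx _ (hζ θ)).1)).hasFDerivAt

/-- The derivative in a fixed direction is a Cauchy integral over a small circle, which may be
differentiated under the integral sign. -/
theorem differentiableOn_fderiv_apply (hU : IsOpen U) (hf : DifferentiableOn ℂ f U) (v : E) :
    DifferentiableOn ℂ (fun x ↦ fderiv ℂ f x v) U := by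
  intro z hz
  obtain ⟨C, hC⟩ := exists_eventually_norm_fderiv_le hU hf hz
  have hline : Tendsto (fun q : E × ℂ ↦ q.1 + q.2 • v) (𝓝 z ×ˢ 𝓝 0) (𝓝 z) := by
    rw [← nhds_prod_eq]
    exact Continuous.tendsto' (by fun_prop) _ _ (by simp)
  obtain ⟨P, hP, Q, hQ, hPQ⟩ := eventually_prod_iff.mp (hline.eventually hC)
  obtain ⟨R, hR, hRQ⟩ := Metric.nhds_basis_closedBall.mem_iff.mp hQ
  have hcauchy : ∀ᶠ x in 𝓝 z, fderiv ℂ f x v =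
      (2 * Real.pi * Complex.I : ℂ)⁻¹ • ∮ ζ in C(0, R), (1 / ζ ^ 2) • f (x + ζ • v) := by
    filter_upwards [hP, hU.mem_nhds hz] with x hx hxU
    have hdiff : DifferentiableOn ℂ (fun ζ : ℂ ↦ f (x + ζ • v)) (closedBall 0 R) :=
      hf.comp (by fun_prop) fun ζ hζ ↦ (hPQ hx (hRQ hζ)).1
    rw [← deriv_comp_add_smul (hf.differentiableAt (hU.mem_nhds hxU)),
      eq_inv_smul_iff₀ Complex.two_pi_I_ne_zero]
    simpa using (hdiff.deriv_eq_smul_circleIntegral hR).symm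
  refine DifferentiableAt.differentiableWithinAt ?_
  refine (DifferentiableAt.const_smul ?_ _).congr_of_eventuallyEq hcauchy
  refine differentiableAt_circleIntegral_smul_comp_add hR.le ?_ hU hf (C := C) ?_
  · refine continuousOn_const.div (by fun_prop) fun ζ hζ ↦ pow_ne_zero 2 ?_
    rintro rfl
    exact hR.ne (by simpa using hζ)
  · filter_upwards [hP] with x hx ζ hζ
    exact hPQ hx (hRQ (sphere_subset_closedBall hζ))

theorem contDiffOn_infty_of_differentiableOn_of_isOpen (hU : IsOpen U)
    (hf : DifferentiableOn ℂ f U) : ContDiffOn ℂ ∞ f U := by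
  refine contDiffOn_infty.mpr fun n ↦ ?_
  induction n generalizing f with
  | zero => exact contDiffOn_zero.mpr hf.continuousOn
  | succ n ih =>
    push_cast
    refine contDiffOn_succ_of_fderiv_apply hf (by simp) fun v ↦ ?_
    refine (ih (differentiableOn_fderiv_apply hU hf v)).congr fun x hx ↦ ?_
    rw [fderivWithin_of_isOpen hU hx]

theorem contDiffAt_infty_of_eventually_differentiableAt
    (hf : ∀ᶠ x in 𝓝 z, DifferentiableAt ℂ f x) : ContDiffAt ℂ ∞ f z := by
  obtain ⟨U, hfU, hU, hz⟩ := _root_.eventually_nhds_iff.mp hf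
  exact (contDiffOn_infty_of_differentiableOn_of_isOpen hU fun x hx ↦
    (hfU x hx).differentiableWithinAt).contDiffAt (hU.mem_nhds hz)

theorem isBigO_iteratedFDeriv_of_isBigO_norm_sub_pow_add
    {p : E} {n m : ℕ} (hf : ∀ᶠ z in 𝓝 p, DifferentiableAt ℂ f z)
    (hfO : f =O[𝓝 p] fun z ↦ ‖z - p‖ ^ (n + m)) :
    iteratedFDeriv ℂ n f =O[𝓝 p] fun z ↦ ‖z - p‖ ^ m := by
  induction n generalizing m with
  | zero =>
    refine .trans (.of_norm_left ?_) (by simpa using hfO)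
    simpa using (Asymptotics.isBigO_refl f (𝓝 p)).norm_left
  | succ n ih =>
    have hsmooth : ∀ᶠ z in 𝓝 p, DifferentiableAt ℂ (iteratedFDeriv ℂ n f) z := by
      filter_upwards [hf.eventually_nhds] with z hz
      exact (contDiffAt_infty_of_eventually_differentiableAt hz).differentiableAt_iteratedFDeriv
        (by exact_mod_cast ENat.natCast_lt_top n)
    have ih' := isBigO_fderiv_of_isBigO_norm_sub_pow_succ hsmooth
      (ih (m := m + 1) (by rwa [← add_assoc, add_right_comm]))
    refine .trans (.of_norm_left ?_) ih'.norm_left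
    simpa [norm_fderiv_iteratedFDeriv] using
      (Asymptotics.isBigO_refl (iteratedFDeriv ℂ (n + 1) f) (𝓝 p)).norm_left

theorem iteratedFDeriv_eq_zero_of_isBigO_norm_sub_pow_succ
    {p : E} {n : ℕ} (hf : ∀ᶠ z in 𝓝 p, DifferentiableAt ℂ f z)
    (hfO : f =O[𝓝 p] fun z ↦ ‖z - p‖ ^ (n + 1)) : iteratedFDeriv ℂ n f p = 0 := by
  simpa using (isBigO_iteratedFDeriv_of_isBigO_norm_sub_pow_add hf hfO).eq_zero_imp.self_of_nhds

end Analyticity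

section Lines

variable {G : Type*} [NormedAddCommGroup G] [NormedSpace ℂ G]

theorem eq_zero_and_isLittleO_pow_of_lt_analyticOrderAt {g : ℂ → G} {n : ℕ}
    (hn : n < analyticOrderAt g 0) : g 0 = 0 ∧ g =o[𝓝 0] (· ^ n) := by
  have hn0 := (zero_le.trans_lt hn).ne'
  have hg0 := apply_eq_zero_of_analyticOrderAt_ne_zero hn0
  refine ⟨hg0, ?_⟩
  obtain ⟨h, hh, hgh⟩ := (natCast_le_analyticOrderAt (n := n + 1)
    (analyticOrderAt_ne_zero.mp hn0).1).mp (by exact_mod_cast Order.add_one_le_of_lt hn)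
  have hO : (fun w ↦ w ^ (n + 1) • h w) =O[𝓝 0] fun w : ℂ ↦ w ^ (n + 1) • (1 : ℂ) :=
    (Asymptotics.isBigO_refl _ _).smul (hh.continuousAt.isBigO_one ℂ)
  simp only [sub_zero] at hgh
  have hgO : g =O[𝓝 0] fun w ↦ w ^ (n + 1) := by simpa using EventuallyEq.trans_isBigO hgh hO
  exact hgO.trans_isLittleO (Asymptotics.isLittleO_pow_pow n.lt_succ_self)

theorem norm_le_mul_norm_pow_of_lt_analyticOrderAt {g : ℂ → G} {R M : ℝ} {n : ℕ}
    (hg : DifferentiableOn ℂ g (ball 0 R)) (hM : ∀ w ∈ ball 0 R, ‖g w‖ ≤ M)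
    (hn : n < analyticOrderAt g 0) {w : ℂ} (hw : w ∈ ball 0 R) :
    ‖g w‖ ≤ M * (‖w‖ / R) ^ (n + 1) := by
  obtain ⟨hg0, hgo⟩ := eq_zero_and_isLittleO_pow_of_lt_analyticOrderAt hn
  have hmaps : Set.MapsTo g (ball 0 R) (closedBall (g 0) M) := fun x hx ↦ by
    simpa [hg0] using hM x hx
  have hO : (g · - g 0) =o[𝓝 0] fun w ↦ ‖w - 0‖ ^ n := by
    simpa [hg0, norm_pow] using hgo.norm_right
  simpa [dist_eq_norm, hg0] using
    Complex.dist_le_mul_div_pow_of_mapsTo_ball_of_isLittleO hg hmaps hO hw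

variable {E : Type*} [NormedAddCommGroup E] [NormedSpace ℂ E] {f : E → G} {p : E} {n : ℕ}

theorem isBigO_norm_sub_pow_succ_of_forall_lt_analyticOrderAt
    (hf : ∀ᶠ z in 𝓝 p, DifferentiableAt ℂ f z)
    (hn : ∀ v : E, n < analyticOrderAt (fun w : ℂ ↦ f (p + w • v)) 0) :
    f =O[𝓝 p] fun z ↦ ‖z - p‖ ^ (n + 1) := by
  have hbdd : ∀ᶠ z in 𝓝 p, ‖f z‖ < ‖f p‖ + 1 :=
    hf.self_of_nhds.continuousAt.norm.eventually_lt_const (lt_add_one _)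
  obtain ⟨r, hr, hball⟩ := Metric.eventually_nhds_iff_ball.mp (hf.and hbdd)
  refine .of_bound ((‖f p‖ + 1) / r ^ (n + 1)) ?_
  filter_upwards [ball_mem_nhds p hr] with z hz
  rcases eq_or_ne z p with rfl | hne
  · have hfz : f z = 0 := by
      simpa using (eq_zero_and_isLittleO_pow_of_lt_analyticOrderAt (hn 0)).1
    simp [hfz]
  have hpos : 0 < ‖z - p‖ := norm_sub_pos_iff.mpr hne
  have hline : ∀ w ∈ ball (0 : ℂ) (r / ‖z - p‖), p + w • (z - p) ∈ ball p r := fun w hw ↦ by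
    rw [mem_ball_zero_iff, lt_div_iff₀ hpos] at hw
    simpa [norm_smul] using hw
  have hz1 : (1 : ℂ) ∈ ball 0 (r / ‖z - p‖) := by
    rw [mem_ball_iff_norm] at hz
    simpa using (one_lt_div hpos).mpr hz
  have hschwarz := norm_le_mul_norm_pow_of_lt_analyticOrderAt
    (fun w hw ↦ ((hball _ (hline w hw)).1.comp w (by fun_prop)).differentiableWithinAt)
    (fun w hw ↦ (hball _ (hline w hw)).2.le) (hn (z - p)) hz1
  simpa [div_pow, div_mul_eq_mul_div, mul_div_assoc] using hschwarz

theorem exists_analyticOrderAt_le_of_iteratedFDeriv_ne_zero [FiniteDimensional ℂ E]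
    [CompleteSpace G] [SecondCountableTopology G] (hf : ∀ᶠ z in 𝓝 p, DifferentiableAt ℂ f z)
    (hn : iteratedFDeriv ℂ n f p ≠ 0) :
    ∃ v : E, analyticOrderAt (fun w : ℂ ↦ f (p + w • v)) 0 ≤ n := by
  contrapose! hn
  exact iteratedFDeriv_eq_zero_of_isBigO_norm_sub_pow_succ hf
    (isBigO_norm_sub_pow_succ_of_forall_lt_analyticOrderAt hf hn)

end Lines

section PerturbedPolynomials

open Polynomial

theorem norm_dslope_le_of_forall_mem_closedBall_norm_le {G : Type*} [NormedAddCommGroup G]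
    [NormedSpace ℂ G] [CompleteSpace G] {e : ℂ → G} {z₀ a w : ℂ} {r R M : ℝ} (hrR : r < R)
    (he : DifferentiableOn ℂ e (closedBall z₀ R)) (hM : ∀ w ∈ closedBall z₀ R, ‖e w‖ ≤ M)
    (ha : a ∈ closedBall z₀ r) (hw : w ∈ closedBall z₀ R) : ‖dslope e a w‖ ≤ M * (2 / (R - r)) := by
  have hR : 0 < R := (nonempty_closedBall.mp ⟨a, ha⟩).trans_lt hrR
  have haR : a ∈ ball z₀ R := closedBall_subset_ball hrR ha
  have hd : DifferentiableOn ℂ (dslope e a) (closedBall z₀ R) :=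
    (Complex.differentiableOn_dslope (closedBall_mem_nhds_of_mem haR)).mpr he
  rw [← closure_ball z₀ hR.ne'] at hw hd
  refine Complex.norm_le_of_forall_mem_frontier_norm_le isBounded_ball hd.diffContOnCl
    (fun z hz ↦ ?_) hw
  rw [frontier_ball z₀ hR.ne'] at hz
  have hza : R - r ≤ ‖z - a‖ := by
    rw [← dist_eq_norm]
    linarith [mem_sphere.mp hz, mem_closedBall.mp ha, dist_triangle z a z₀]
  have hne : z ≠ a := norm_sub_pos_iff.mp ((sub_pos.mpr hrR).trans_le hza)
  have hsub : ‖e z - e a‖ ≤ M * 2 := by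
    linarith [norm_sub_le (e z) (e a), hM z (sphere_subset_closedBall hz),
      hM a (ball_subset_closedBall haR)]
  rw [dslope_of_ne _ hne, slope_def_module, norm_smul, norm_inv, ← div_eq_inv_mul, ← mul_div_assoc]
  gcongr
  exact (norm_nonneg _).trans hsub

theorem monic_divByMonic_X_sub_C {A : Type*} [CommRing A] [Nontrivial A] {p : A[X]}
    (hp : p.Monic) (hdeg : p.natDegree ≠ 0) (a : A) : (p /ₘ (X - C a)).Monic := by
  rw [Monic, leadingCoeff_divByMonic_of_monic (monic_X_sub_C a), hp]
  rw [degree_X_sub_C, degree_eq_natDegree hp.ne_zero]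
  exact_mod_cast Nat.one_le_iff_ne_zero.mpr hdeg

theorem sub_mul_eval_divByMonic_add_dslope (p : ℂ[X]) (e : ℂ → ℂ) (a w : ℂ) :
    (w - a) * ((p /ₘ (X - C a)).eval w + dslope e a w) =
      (p.eval w + e w) - (p.eval a + e a) := by
  have hp := congrArg (eval w) (X_sub_C_mul_divByMonic_eq_sub_modByMonic p a)
  rw [modByMonic_X_sub_C_eq_C_eval] at hp
  simp only [eval_mul, eval_sub, eval_X, eval_C] at hp
  have he := sub_smul_dslope e a w
  rw [smul_eq_mul] at he
  rw [mul_add, hp, he]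
  ring

theorem exists_prod_norm_sub_le_norm_eval_add {z₀ : ℂ} {r R : ℝ} (hr : 0 ≤ r) (hrR : r < R)
    {k : ℕ} {p : ℂ[X]} {e : ℂ → ℂ} {M : ℝ} (hp : p.Monic) (hpk : p.natDegree = k)
    (he : DifferentiableOn ℂ e (closedBall z₀ R)) (heM : ∀ w ∈ closedBall z₀ R, ‖e w‖ ≤ M)
    (hM : M * (2 / (R - r)) ^ k ≤ 1 / 2) :
    ∃ a : Fin k → ℂ, ∀ w ∈ closedBall z₀ r,
      (1 / 2) ^ (k + 1) * ∏ i, ‖w - a i‖ ≤ ‖p.eval w + e w‖ := by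
  have hsub : closedBall z₀ r ⊆ closedBall z₀ R := closedBall_subset_closedBall hrR.le
  induction k generalizing p e M with
  | zero =>
    obtain rfl : p = 1 := hp.natDegree_eq_zero.mp hpk
    refine ⟨Fin.elim0, fun w hw ↦ ?_⟩
    have hone : ‖(1 : ℂ)‖ ≤ ‖1 + e w‖ + ‖e w‖ := by simpa using norm_sub_le (1 + e w) (e w)
    simp only [norm_one, pow_zero, mul_one, zero_add, pow_one, Finset.univ_eq_empty,
      Finset.prod_empty, eval_one] at hone hM ⊢
    linarith [heM w (hsub hw)]
  | succ k ih =>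
    -- Subtracting the value at a minimum point `a` makes `p + e` divisible by `w - a`,
    -- and at most doubles its norm.
    obtain ⟨a, ha, hmin⟩ := (isCompact_closedBall z₀ r).exists_isMinOn
      ⟨z₀, mem_closedBall_self hr⟩
      (p.continuous.continuousOn.add (he.continuousOn.mono hsub)).norm
    have hnhds : closedBall z₀ R ∈ 𝓝 a :=
      closedBall_mem_nhds_of_mem (closedBall_subset_ball hrR ha)
    obtain ⟨b, hb⟩ := ih (monic_divByMonic_X_sub_C hp (by simp [hpk]) a)
      (by simp [natDegree_divByMonic _ (monic_X_sub_C a), hpk])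
      ((Complex.differentiableOn_dslope hnhds).mpr he)
      (fun w ↦ norm_dslope_le_of_forall_mem_closedBall_norm_le hrR he heM ha)
      (by rwa [mul_assoc, ← pow_succ'])
    refine ⟨Fin.cons a b, fun w hw ↦ ?_⟩
    have hmin_w : ‖p.eval a + e a‖ ≤ ‖p.eval w + e w‖ := hmin hw
    rw [Fin.prod_univ_succ]
    simp only [Fin.cons_zero, Fin.cons_succ]
    calc (1 / 2) ^ (k + 1 + 1) * (‖w - a‖ * ∏ i, ‖w - b i‖)
        = 1 / 2 * (‖w - a‖ * ((1 / 2) ^ (k + 1) * ∏ i, ‖w - b i‖)) := by ring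
      _ ≤ 1 / 2 * (‖w - a‖ * ‖(p /ₘ (X - C a)).eval w + dslope e a w‖) := by
        gcongr
        exact hb w hw
      _ = 1 / 2 * ‖(p.eval w + e w) - (p.eval a + e a)‖ := by
        rw [← norm_mul, sub_mul_eval_divByMonic_add_dslope]
      _ ≤ ‖p.eval w + e w‖ := by
        linarith [norm_sub_le (p.eval w + e w) (p.eval a + e a)]

theorem exists_prod_norm_sub_le_norm_of_norm_sub_le {z₀ l : ℂ} {r : ℝ} (hr : 0 < r) (hl : l ≠ 0)
    {k : ℕ} {p : ℂ[X]} {g : ℂ → ℂ} (hp : p.Monic) (hpk : p.natDegree = k)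
    (hg : DifferentiableOn ℂ g (closedBall z₀ (2 * r)))
    (hgp : ∀ w ∈ closedBall z₀ (2 * r), ‖g w - l * p.eval w‖ ≤ ‖l‖ * (r / 2) ^ k / 2) :
    ∃ a : Fin k → ℂ, ∀ w ∈ closedBall z₀ r,
      ‖l‖ * (1 / 2) ^ (k + 1) * ∏ i, ‖w - a i‖ ≤ ‖g w‖ := by
  have hl' : 0 < ‖l‖ := norm_pos_iff.mpr hl
  obtain ⟨a, ha⟩ := exists_prod_norm_sub_le_norm_eval_add (z₀ := z₀) (r := r) (R := 2 * r)
    (e := fun w ↦ l⁻¹ * (g w - l * p.eval w)) (M := (r / 2) ^ k / 2) hr.le (by linarith) hp hpk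
    ((hg.sub (p.differentiable.differentiableOn.const_mul l)).const_mul _)
    (fun w hw ↦ by
      rw [norm_mul, norm_inv, inv_mul_le_iff₀ hl', ← mul_div_assoc]
      exact hgp w hw)
    (by
      have : r / 2 * (2 / (2 * r - r)) = 1 := by field_simp; ring
      rw [div_mul_eq_mul_div, ← mul_pow, this, one_pow])
  refine ⟨a, fun w hw ↦ ?_⟩
  calc ‖l‖ * (1 / 2) ^ (k + 1) * ∏ i, ‖w - a i‖
      ≤ ‖l‖ * ‖p.eval w + l⁻¹ * (g w - l * p.eval w)‖ := by
        rw [mul_assoc]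
        gcongr
        exact ha w hw
    _ = ‖g w‖ := by
        rw [← norm_mul]
        congr 1
        field_simp
        ring

end PerturbedPolynomials

section Slices

theorem exists_isLittleO_sub_mul_pow_of_analyticOrderAt_eq {g : ℂ → ℂ} {m : ℕ}
    (hg : AnalyticAt ℂ g 0) (hm : analyticOrderAt g 0 = m) :
    ∃ l ≠ 0, (fun w ↦ g w - l * w ^ m) =o[𝓝 0] fun w ↦ w ^ m := by
  obtain ⟨h, hh, hh0, hgh⟩ := hg.analyticOrderAt_eq_natCast.mp hm
  refine ⟨h 0, hh0, ?_⟩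
  have hlim : (fun w ↦ h w - h 0) =o[𝓝 0] fun _ ↦ (1 : ℂ) :=
    (Asymptotics.isLittleO_one_iff ℂ).mpr (tendsto_sub_nhds_zero_iff.mpr hh.continuousAt)
  refine ((Asymptotics.isBigO_refl (fun w : ℂ ↦ w ^ m) (𝓝 0)).mul_isLittleO hlim).congr' ?_
    (by simp)
  filter_upwards [hgh] with w hw
  rw [hw, sub_zero, smul_eq_mul]
  ring

theorem eventually_forall_mem_closedBall_norm_le_of_isLittleO_pow {E G : Type*}
    [NormedDivisionRing E] [NormedAddCommGroup G] {e : E → G} {m : ℕ} {ε : ℝ}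
    (he : e =o[𝓝 0] fun w ↦ w ^ m) (hε : 0 < ε) :
    ∀ᶠ r in 𝓝[>] 0, ∀ w ∈ closedBall (0 : E) r, ‖e w‖ ≤ ε * r ^ m := by
  filter_upwards [(eventually_closedBall_subset (he.bound hε)).filter_mono nhdsWithin_le_nhds]
    with r hr w hw
  have hwr : ‖w‖ ≤ r := by simpa using hw
  calc ‖e w‖ ≤ ε * ‖w ^ m‖ := hr hw
    _ ≤ ε * r ^ m := by
      rw [norm_pow]
      gcongr

theorem eventually_forall_norm_sub_le_of_isCompact {T X G : Type*} [TopologicalSpace T]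
    [TopologicalSpace X] [SeminormedAddCommGroup G] {F : T × X → G} {t₀ : T} {K : Set X} {ε : ℝ}
    (hK : IsCompact K) (hF : ∀ x ∈ K, ContinuousAt F (t₀, x)) (hε : 0 < ε) :
    ∀ᶠ t in 𝓝 t₀, ∀ x ∈ K, ‖F (t, x) - F (t₀, x)‖ ≤ ε := by
  refine hK.eventually_forall_of_forall_eventually fun x hx ↦ ?_
  have hcont : ContinuousAt (fun q : T × X ↦ F q - F (t₀, q.2)) (t₀, x) :=
    (hF x hx).sub <| ContinuousAt.comp (x := (t₀, x)) (f := fun q : T × X ↦ (t₀, q.2)) (hF x hx)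
      (by fun_prop)
  exact (hcont.norm.eventually_lt_const (by simpa using hε)).mono fun q hq ↦ hq.le

variable {T : Type*} [TopologicalSpace T] {F : T × ℂ → ℂ} {t₀ : T} {m : ℕ}

theorem exists_eventually_prod_norm_sub_le_norm_slice
    (hF : ∀ᶠ q in 𝓝 (t₀, (0 : ℂ)),
      ContinuousAt F q ∧ DifferentiableAt ℂ (fun w ↦ F (q.1, w)) q.2)
    (hm : analyticOrderAt (fun w ↦ F (t₀, w)) 0 = m) :
    ∃ C > 0, ∃ r > 0, ∀ᶠ t in 𝓝 t₀, ∃ a : Fin m → ℂ, ∀ w ∈ closedBall (0 : ℂ) r,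
      C * ∏ i, ‖w - a i‖ ≤ ‖F (t, w)‖ := by
  have hslice : ∀ᶠ w in 𝓝 (0 : ℂ), ∀ᶠ q in 𝓝 (t₀, w),
      ContinuousAt F q ∧ DifferentiableAt ℂ (fun w ↦ F (q.1, w)) q.2 :=
    hF.eventually_nhds.curry_nhds.self_of_nhds
  have hanalytic : AnalyticAt ℂ (fun w ↦ F (t₀, w)) 0 :=
    Complex.analyticAt_iff_eventually_differentiableAt.mpr
      (hslice.mono fun w hw ↦ hw.self_of_nhds.2)
  obtain ⟨l, hl, hmodel⟩ := exists_isLittleO_sub_mul_pow_of_analyticOrderAt_eq hanalytic hm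
  obtain ⟨R, ⟨hball, hmodelR⟩, hR⟩ :=
    (((eventually_closedBall_subset hslice).filter_mono nhdsWithin_le_nhds).and
      (eventually_forall_mem_closedBall_norm_le_of_isLittleO_pow hmodel
        (ε := ‖l‖ / (4 * 4 ^ m)) (by positivity)) |>.and self_mem_nhdsWithin).exists
  obtain ⟨r, rfl⟩ : ∃ r, R = 2 * r := ⟨R / 2, by ring⟩
  have hr : 0 < r := by simpa using hR
  have hε : ‖l‖ / (4 * 4 ^ m) * (2 * r) ^ m = ‖l‖ * (r / 2) ^ m / 4 := by
    rw [show r / 2 = 2 * r / 4 by ring, div_pow]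
    field_simp
  rw [hε] at hmodelR
  have hcpt := isCompact_closedBall (0 : ℂ) (2 * r)
  have hclose := eventually_forall_norm_sub_le_of_isCompact (F := F) (t₀ := t₀) hcpt
    (fun w hw ↦ (hball hw).self_of_nhds.1) (ε := ‖l‖ * (r / 2) ^ m / 4) (by positivity)
  have hdiff : ∀ᶠ t in 𝓝 t₀, ∀ w ∈ closedBall (0 : ℂ) (2 * r),
      DifferentiableAt ℂ (fun w ↦ F (t, w)) w :=
    hcpt.eventually_forall_of_forall_eventually fun w hw ↦ (hball hw).mono fun q hq ↦ hq.2
  refine ⟨‖l‖ * (1 / 2) ^ (m + 1), by positivity, r, hr, ?_⟩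
  filter_upwards [hclose, hdiff] with t ht htd
  refine exists_prod_norm_sub_le_norm_of_norm_sub_le hr hl (Polynomial.monic_X_pow m)
    (Polynomial.natDegree_X_pow m) (fun w hw ↦ (htd w hw).differentiableWithinAt) fun w hw ↦ ?_
  rw [Polynomial.eval_pow, Polynomial.eval_X]
  linarith [norm_sub_le_norm_sub_add_norm_sub (F (t, w)) (F (t₀, w)) (l * w ^ m), ht w hw,
    hmodelR w hw]

end Slices

section Integrals

open scoped ENNReal

theorem enorm_norm_rpow_le {G : Type*} [NormedAddCommGroup G] (x : G) (t : ℝ) :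
    ‖‖x‖ ^ t‖ₑ ≤ ‖x‖ₑ ^ t := by
  rcases eq_or_ne x 0 with rfl | hx
  · rcases lt_trichotomy t 0 with ht | rfl | ht
    · simp [ENNReal.zero_rpow_of_neg ht]
    · simp
    · simp [Real.zero_rpow ht.ne']
  · rw [Real.enorm_of_nonneg (by positivity), ← ofReal_norm,
      ENNReal.ofReal_rpow_of_pos (norm_pos_iff.mpr hx)]

theorem rpow_neg_le_rpow_neg {x y : ℝ≥0∞} {s : ℝ} (hxy : x ≤ y) (hs : 0 ≤ s) :
    y ^ (-s) ≤ x ^ (-s) := by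
  rw [ENNReal.rpow_neg, ENNReal.rpow_neg, ENNReal.inv_le_inv]
  exact ENNReal.rpow_le_rpow hxy hs

theorem prod_rpow_neg_le_one_add_sum {ι : Type*} [Fintype ι] (x : ι → ℝ≥0∞) {s : ℝ} (hs : 0 ≤ s) :
    (∏ i, x i) ^ (-s) ≤ 1 + ∑ i, x i ^ (-(s * Fintype.card ι)) := by
  rcases isEmpty_or_nonempty ι with _ | _
  · simp
  obtain ⟨j, hj⟩ := Finite.exists_min x
  have hmin : x j ^ Fintype.card ι ≤ ∏ i, x i := by
    simpa using Finset.prod_le_prod' fun i (_ : i ∈ Finset.univ) ↦ hj i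
  calc (∏ i, x i) ^ (-s) ≤ (x j ^ Fintype.card ι) ^ (-s) :=
        rpow_neg_le_rpow_neg hmin hs
    _ = x j ^ (-(s * Fintype.card ι)) := by
        rw [← ENNReal.rpow_natCast, ← ENNReal.rpow_mul]
        ring_nf
    _ ≤ ∑ i, x i ^ (-(s * Fintype.card ι)) :=
        Finset.single_le_sum (f := fun i ↦ x i ^ (-(s * Fintype.card ι))) (fun _ _ ↦ zero_le)
          (Finset.mem_univ j)
    _ ≤ _ := le_add_self

section Translates

variable {E : Type*} [NormedAddCommGroup E] [MeasurableSpace E] [BorelSpace E]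
  {μ : Measure E} [μ.IsAddRightInvariant] {A : Set E} {s : ℝ}

theorem setLIntegral_enorm_sub_rpow_neg_le (a : E) (hs : 0 ≤ s) :
    ∫⁻ x in A, ‖x - a‖ₑ ^ (-s) ∂μ ≤ ∫⁻ x in ball 0 1, ‖x‖ₑ ^ (-s) ∂μ + μ A := by
  set h : E → ℝ≥0∞ := (ball 0 1).indicator fun x ↦ ‖x‖ₑ ^ (-s)
  have hle : ∀ y : E, ‖y‖ₑ ^ (-s) ≤ h y + 1 := fun y ↦ by
    by_cases hy : y ∈ ball 0 1
    · simp [h, Set.indicator_of_mem hy]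
    · have hone : 1 ≤ ‖y‖ₑ := by
        rw [← ofReal_norm]
        exact ENNReal.one_le_ofReal.mpr (by simpa using hy)
      exact ((rpow_neg_le_rpow_neg hone hs).trans_eq (ENNReal.one_rpow _)).trans le_add_self
  calc ∫⁻ x in A, ‖x - a‖ₑ ^ (-s) ∂μ ≤ ∫⁻ x in A, (h (x - a) + 1) ∂μ :=
        lintegral_mono fun x ↦ hle (x - a)
    _ = ∫⁻ x in A, h (x - a) ∂μ + μ A := by
        rw [lintegral_add_right _ measurable_const, setLIntegral_one]
    _ ≤ ∫⁻ x, h (x - a) ∂μ + μ A := by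
        exact add_le_add_left (setLIntegral_le_lintegral _ _) _
    _ = _ := by
        rw [lintegral_sub_right_eq_self h, lintegral_indicator measurableSet_ball]

theorem setLIntegral_rpow_neg_le_of_mul_prod_enorm_sub_le {ι : Type*} [Fintype ι] {a : ι → E}
    {g : E → ℝ≥0∞} {C : ℝ≥0∞} (hA : MeasurableSet A) (hC : C ≠ ∞) (hs : 0 ≤ s)
    (hg : ∀ x ∈ A, C * ∏ i, ‖x - a i‖ₑ ≤ g x) :
    ∫⁻ x in A, g x ^ (-s) ∂μ ≤ C ^ (-s) * (μ A + Fintype.card ι *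
      (∫⁻ x in ball 0 1, ‖x‖ₑ ^ (-(s * Fintype.card ι)) ∂μ + μ A)) := by
  have hpointwise : ∀ x ∈ A,
      g x ^ (-s) ≤ C ^ (-s) * (1 + ∑ i, ‖x - a i‖ₑ ^ (-(s * Fintype.card ι))) := fun x hx ↦
    calc g x ^ (-s) ≤ (C * ∏ i, ‖x - a i‖ₑ) ^ (-s) :=
          rpow_neg_le_rpow_neg (hg x hx) hs
      _ = C ^ (-s) * (∏ i, ‖x - a i‖ₑ) ^ (-s) :=
          ENNReal.mul_rpow_of_ne_top hC (ENNReal.prod_ne_top fun _ _ ↦ enorm_ne_top) _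
      _ ≤ _ := by
          gcongr
          exact prod_rpow_neg_le_one_add_sum _ hs
  refine (setLIntegral_mono' hA hpointwise).trans ?_
  rw [lintegral_const_mul _ (by fun_prop), lintegral_add_left measurable_const,
    lintegral_finsetSum _ (fun i _ ↦ by fun_prop), setLIntegral_one, ← nsmul_eq_mul,
    ← Finset.card_univ]
  gcongr
  exact Finset.sum_le_card_nsmul _ _ _ fun i _ ↦
    setLIntegral_enorm_sub_rpow_neg_le (a i) (by positivity)

end Translates

theorem setLIntegral_ball_enorm_rpow_neg_lt_top {E : Type*} [NormedAddCommGroup E]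
    [NormedSpace ℝ E] [FiniteDimensional ℝ E] [MeasurableSpace E] [BorelSpace E] (μ : Measure E)
    [μ.IsAddHaarMeasure] {s : ℝ} (hs₀ : 0 ≤ s) (hs : s < Module.finrank ℝ E) (r : ℝ) :
    ∫⁻ x in ball 0 r, ‖x‖ₑ ^ (-s) ∂μ < ∞ := by
  have hdim : 0 < Module.finrank ℝ E := by exact_mod_cast hs₀.trans_lt hs
  have : Nontrivial E := Module.nontrivial_of_finrank_pos hdim
  have hint : IntegrableOn (fun x : E ↦ ‖x‖ ^ (-s)) (ball 0 r) μ :=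
    integrableOn_ball_of_norm_le_rpow (C := 1) hdim hs
      (.of_forall fun x ↦ by rw [Real.norm_of_nonneg (by positivity), one_mul])
      (measurable_norm.pow_const _).aestronglyMeasurable
  refine lt_of_eq_of_lt (lintegral_congr_ae ?_) hint.hasFiniteIntegral
  filter_upwards [ae_restrict_of_ae (Measure.ae_ne μ 0)] with x hx
  rw [Real.enorm_of_nonneg (by positivity), ← ofReal_norm,
    ENNReal.ofReal_rpow_of_pos (norm_pos_iff.mpr hx)]

section Averaging

variable {E S : Type*} [AddGroup E] [MeasurableSpace E] [MeasurableAdd₂ E]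
  [MeasurableSpace S] {μ : Measure E} [SFinite μ] [μ.IsAddRightInvariant]
  {ν : Measure S} [SFinite ν] {τ : S → E} {g : E → ℝ≥0∞}

theorem measure_mul_setLIntegral_le_setLIntegral_setLIntegral_add (hg : Measurable g)
    (hτ : Measurable τ) {V W : Set E} {D : Set S} (hV : MeasurableSet V) (hW : MeasurableSet W)
    (hD : MeasurableSet D) (hVW : ∀ s ∈ D, ∀ z, z + τ s ∈ V → z ∈ W) :
    ν D * ∫⁻ z in V, g z ∂μ ≤ ∫⁻ z in W, ∫⁻ s in D, g (z + τ s) ∂ν ∂μ := by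
  have hindicator : ∀ s ∈ D, ∀ z,
      V.indicator g (z + τ s) ≤ W.indicator (fun z ↦ g (z + τ s)) z := fun s hs z ↦ by
    by_cases hz : z + τ s ∈ V
    · rw [Set.indicator_of_mem hz, Set.indicator_of_mem (hVW s hs z hz)]
    · simp [Set.indicator_of_notMem hz]
  calc ν D * ∫⁻ z in V, g z ∂μ = ∫⁻ s in D, ∫⁻ z, V.indicator g (z + τ s) ∂μ ∂ν := by
        simp only [lintegral_add_right_eq_self (μ := μ) (V.indicator g), lintegral_indicator hV,
          setLIntegral_const, mul_comm]
    _ ≤ ∫⁻ s in D, ∫⁻ z in W, g (z + τ s) ∂μ ∂ν := by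
        refine setLIntegral_mono' hD fun s hs ↦ ?_
        rw [← lintegral_indicator hW]
        exact lintegral_mono (hindicator s hs)
    _ = ∫⁻ z in W, ∫⁻ s in D, g (z + τ s) ∂ν ∂μ :=
        lintegral_lintegral_swap (by fun_prop)

theorem exists_mem_nhds_setLIntegral_lt_top_of_slices [TopologicalSpace E]
    [IsTopologicalAddGroup E] [OpensMeasurableSpace E] [IsLocallyFiniteMeasure μ]
    [TopologicalSpace S] [OpensMeasurableSpace S] [ν.IsOpenPosMeasure] (hg : Measurable g)
    (hτ : Measurable τ) {s₀ : S} (hτ₀ : Tendsto τ (𝓝 s₀) (𝓝 0)) {D : Set S} (hD : D ∈ 𝓝 s₀)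
    {p : E} {K : ℝ≥0∞} (hK : K ≠ ∞)
    (hslice : ∀ᶠ z in 𝓝 p, ∫⁻ s in D, g (z + τ s) ∂ν ≤ K) :
    ∃ V ∈ 𝓝 p, ∫⁻ z in V, g z ∂μ < ∞ := by
  obtain ⟨B, hpB, hB, hμB⟩ := μ.exists_isOpen_measure_lt_top p
  set H : Set E := {z | ∫⁻ s in D, g (z + τ s) ∂ν ≤ K}
  set W := interior H ∩ B
  have hW : IsOpen W := isOpen_interior.inter hB
  have hpW : p ∈ W := ⟨mem_interior_iff_mem_nhds.mpr hslice, hpB⟩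
  have hsub : Tendsto (fun q : E × S ↦ q.1 - τ q.2) (𝓝 p ×ˢ 𝓝 s₀) (𝓝 p) := by
    simpa using tendsto_fst.sub (hτ₀.comp tendsto_snd)
  obtain ⟨V, hV, Q, hQ, hVQ⟩ := mem_prod_iff.mp (hsub (hW.mem_nhds hpW))
  set D' := interior (D ∩ Q)
  have hνD' : ν D' ≠ 0 := isOpen_interior.measure_ne_zero ν
    ⟨s₀, mem_interior_iff_mem_nhds.mpr (inter_mem hD hQ)⟩
  have hD'Q : D' ⊆ D ∩ Q := interior_subset
  refine ⟨interior V, interior_mem_nhds.mpr hV, ENNReal.lt_top_of_mul_ne_top_right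
    (ne_top_of_le_ne_top (ENNReal.mul_ne_top hK (ne_top_of_le_ne_top hμB.ne
      (measure_mono (Set.inter_subset_right : W ⊆ B)))) ?_) hνD'⟩
  calc ν D' * ∫⁻ z in interior V, g z ∂μ
      ≤ ∫⁻ z in W, ∫⁻ s in D', g (z + τ s) ∂ν ∂μ :=
        measure_mul_setLIntegral_le_setLIntegral_setLIntegral_add hg hτ
          isOpen_interior.measurableSet hW.measurableSet isOpen_interior.measurableSet
          fun s hs z hz ↦ by
            simpa using hVQ (Set.mk_mem_prod (interior_subset hz) (hD'Q hs).2)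
    _ ≤ ∫⁻ _ in W, K ∂μ := setLIntegral_mono' hW.measurableSet fun z hz ↦
        (lintegral_mono_set (hD'Q.trans Set.inter_subset_left)).trans
          (interior_subset (s := H) hz.1)
    _ = K * μ W := setLIntegral_const _ _

end Averaging

end Integrals

section SingularityExponent

open scoped ENNReal

variable {E : Type*} [NormedAddCommGroup E] [NormedSpace ℂ E] {f : E → ℂ} {p : E}

theorem exists_eventually_setLIntegral_line_le {v : E} {m : ℕ} {s : ℝ}
    (hf : ∀ᶠ z in 𝓝 p, DifferentiableAt ℂ f z)
    (hm : analyticOrderAt (fun w : ℂ ↦ f (p + w • v)) 0 = m) (hs : 0 ≤ s) (hsm : s * m < 2) :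
    ∃ r > 0, ∃ K ≠ ∞, ∀ᶠ z in 𝓝 p, ∫⁻ w in ball (0 : ℂ) r, ‖f (z + w • v)‖ₑ ^ (-s) ≤ K := by
  have hline : Tendsto (fun q : E × ℂ ↦ q.1 + q.2 • v) (𝓝 (p, 0)) (𝓝 p) :=
    Continuous.tendsto' (by fun_prop) _ _ (by simp)
  obtain ⟨C, hC, r, hr, hprod⟩ := exists_eventually_prod_norm_sub_le_norm_slice
    (F := fun q : E × ℂ ↦ f (q.1 + q.2 • v)) (t₀ := p)
    ((hline.eventually hf).mono fun q hq ↦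
      ⟨ContinuousAt.comp (f := fun q : E × ℂ ↦ q.1 + q.2 • v) hq.continuousAt (by fun_prop),
        hq.comp q.2 (by fun_prop)⟩) hm
  set J := ∫⁻ w in ball (0 : ℂ) 1, ‖w‖ₑ ^ (-(s * m))
  have hJ : J ≠ ∞ :=
    (setLIntegral_ball_enorm_rpow_neg_lt_top volume (by positivity) (by simpa using hsm) 1).ne
  have hball : volume (ball (0 : ℂ) r) ≠ ∞ := measure_ball_lt_top.ne
  refine ⟨r, hr, .ofReal C ^ (-s) * (volume (ball (0 : ℂ) r) + m * (J + volume (ball (0 : ℂ) r))),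
    ?_, ?_⟩
  · refine ENNReal.mul_ne_top (ENNReal.rpow_ne_top_of_ne_zero ?_ ENNReal.ofReal_ne_top) ?_
    · simpa using hC
    · finiteness
  · filter_upwards [hprod] with z ⟨a, ha⟩
    have hg : ∀ w ∈ ball (0 : ℂ) r, .ofReal C * ∏ i, ‖w - a i‖ₑ ≤ ‖f (z + w • v)‖ₑ := fun w hw ↦ by
      simpa only [ENNReal.ofReal_mul hC.le, ofReal_norm,
        ENNReal.ofReal_prod_of_nonneg fun _ _ ↦ norm_nonneg _] using
        ENNReal.ofReal_le_ofReal (ha w (ball_subset_closedBall hw))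
    simpa using setLIntegral_rpow_neg_le_of_mul_prod_enorm_sub_le (μ := volume)
      measurableSet_ball ENNReal.ofReal_ne_top hs hg

theorem integrableAtFilter_norm_rpow_of_setLIntegral_lt_top {X G : Type*} [TopologicalSpace X]
    [MeasurableSpace X] [OpensMeasurableSpace X] [NormedAddCommGroup G] {μ : Measure X}
    {f : X → G} {U : Set X} {x : X} {t : ℝ} (hU : IsOpen U) (hx : x ∈ U) (hf : ContinuousOn f U)
    (hft : ∃ V ∈ 𝓝 x, ∫⁻ y in V, U.indicator (fun y ↦ ‖f y‖ₑ ^ t) y ∂μ < ∞) :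
    IntegrableAtFilter (fun y ↦ ‖f y‖ ^ t) (𝓝 x) μ := by
  obtain ⟨V, hV, hfin⟩ := hft
  refine ⟨V ∩ U, inter_mem hV (hU.mem_nhds hx), ?_, ?_⟩
  · exact ((hf.norm.aemeasurable hU.measurableSet).mono_set
      Set.inter_subset_right).pow_const t |>.aestronglyMeasurable
  · rw [setLIntegral_indicator hU.measurableSet, Set.inter_comm] at hfin
    exact (lintegral_mono fun y ↦ enorm_norm_rpow_le (f y) t).trans_lt hfin

theorem singularity_exponent_ge_inv_order_general [FiniteDimensional ℂ E] [MeasurableSpace E]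
    [BorelSpace E] (μ : Measure E) [μ.IsAddHaarMeasure]
    (hf : ∀ᶠ z in 𝓝 p, DifferentiableAt ℂ f z) {k : ℕ} (horder_ne : iteratedFDeriv ℂ k f p ≠ 0)
    {c : ℝ} (hc0 : 0 ≤ c) (hck : c * k < 1) :
    IntegrableAtFilter (fun z ↦ ‖f z‖ ^ (-(2 * c))) (𝓝 p) μ := by
  have := FiniteDimensional.proper ℂ E
  obtain ⟨U, hfU, hU, hpU⟩ := _root_.eventually_nhds_iff.mp hf
  have hcont : ContinuousOn f U := fun z hz ↦ (hfU z hz).continuousAt.continuousWithinAt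
  obtain ⟨v, hv⟩ := exists_analyticOrderAt_le_of_iteratedFDeriv_ne_zero hf horder_ne
  obtain ⟨m, hm⟩ := ENat.ne_top_iff_exists.mp (ne_top_of_le_ne_top (ENat.natCast_ne_top k) hv)
  have hmk : m ≤ k := by exact_mod_cast hm.trans_le hv
  have hcm : c * m ≤ c * k := by gcongr
  obtain ⟨r, hr, K, hK, hline⟩ := exists_eventually_setLIntegral_line_le (s := 2 * c) hf hm.symm
    (by positivity) (by linarith)
  refine integrableAtFilter_norm_rpow_of_setLIntegral_lt_top hU hpU hcont
    (exists_mem_nhds_setLIntegral_lt_top_of_slices ?_ (ν := volume)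
      (τ := fun w : ℂ ↦ w • v) (s₀ := 0) (by fun_prop) ?_ (ball_mem_nhds 0 hr) hK ?_)
  · classical
    rw [← Set.piecewise_eq_indicator]
    exact (ENNReal.continuous_rpow_const.comp_continuousOn hcont.enorm).measurable_piecewise
      continuousOn_const hU.measurableSet
  · exact Continuous.tendsto' (by fun_prop) _ _ (zero_smul ℂ v)
  · exact hline.mono fun z hz ↦ (lintegral_mono fun w ↦ Set.indicator_le_self _ _ _).trans hz

end SingularityExponent

/-- Lower bound of Lemma 4.3: if `f` is holomorphic near `0 ∈ ℂ²`, not identically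
zero near `0`, with vanishing order `k ≥ 1` at `0`, then for every `0 < c < 1/k`
the function `z ↦ ‖f z‖ ^ (-2c)` is integrable on some open neighborhood of `0`;
in particular `c₀(f) ≥ 1/k`. -/
theorem singularity_exponent_ge_inv_order
    (f : ℂ × ℂ → ℂ) (U : Set (ℂ × ℂ)) (hU : IsOpen U) (h0U : (0 : ℂ × ℂ) ∈ U)
    (hf : DifferentiableOn ℂ f U)
    (hnz : ¬ ∀ᶠ z in nhds (0 : ℂ × ℂ), f z = 0)
    (k : ℕ) (hk : 1 ≤ k)
    (horder_lt : ∀ j < k, iteratedFDeriv ℂ j f 0 = 0)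
    (horder_ne : iteratedFDeriv ℂ k f 0 ≠ 0)
    (c : ℝ) (hc0 : 0 < c) (hck : c < 1 / (k : ℝ)) :
    ∃ V : Set (ℂ × ℂ), IsOpen V ∧ (0 : ℂ × ℂ) ∈ V ∧
      IntegrableOn (fun z => ‖f z‖ ^ (-(2 * c))) V volume := by
  have hk0 : (0 : ℝ) < k := by exact_mod_cast hk
  have : (volume : Measure (ℂ × ℂ)).IsAddHaarMeasure := by
    rw [Measure.volume_eq_prod]
    infer_instance
  obtain ⟨S, hS, hint⟩ := singularity_exponent_ge_inv_order_general volume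
    (hf.eventually_differentiableAt (hU.mem_nhds h0U)) horder_ne hc0.le ((lt_div_iff₀ hk0).mp hck)
  obtain ⟨V, hVS, hV, h0V⟩ := _root_.mem_nhds_iff.mp hS
  exact ⟨V, hV, h0V, hint.mono_set hVS⟩
end

section
/- Let f be a holomorphic function on an open neighborhood of 0 in ℂ², not identically zero near 0, and suppose the vanishing order of f at 0 equals k ≥ 1. Then for every real number c with c > 2/k, the function z ↦ |f(z)|^{-2c} is not integrable on any open neighborhood of 0 with respect to Lebesgue measure on ℂ² ≅ ℝ⁴. In particular the complex singularity exponent of f at 0 satisfies c₀(f) ≤ 2/k. (Upper bound of Lemma 4.3.) -/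
open MeasureTheory

/-!
Near `a` the function `f` agrees, up to `o(‖z - a‖ ^ k)`, with a nonzero homogeneous form of degree
`k`. Choosing a direction `v` on which this form does not vanish, we get `0 < ‖f‖ ≤ M t ^ k` on the
balls `a + t • B(v, s)` for small `t > 0`. In complex dimension `n` these balls have measure
comparable to `t ^ (2n)`, so the integral of `‖f‖ ^ (-2c)` over them is at least a constant times
`t ^ (2n - 2ck)`. When `n ≤ c k` this stays away from `0` as `t → 0`, which contradicts the absolute
continuity of the integral of an integrable function. Since `0 ^ (-2c) = 0` in Lean, only regions
avoiding the zero set of `f` can contribute to such a lower bound.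

The expansion comes from Osgood's lemma, proved by the Cauchy formula on a torus: the kernel
`∏ i, (ζ i - w i)⁻¹` is analytic in `w` with values in the Banach algebra of continuous functions
of the torus parameter, because inversion is analytic on the units, and integration against `f` is
a continuous linear map on this algebra.
-/

open Filter Topology Metric Asymptotics

section Osgood

variable {E F : Type*} [NormedAddCommGroup E] [NormedSpace ℂ E]
  [NormedAddCommGroup F] [NormedSpace ℂ F]

section CompactParameter

variable {K : Type*} [TopologicalSpace K]

theorem ringInverse_continuousMap_apply {g : C(K, ℂ)} (hg : IsUnit g) (κ : K) :
    Ring.inverse g κ = (g κ)⁻¹ :=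
  eq_inv_of_mul_eq_one_left (congrArg (fun h : C(K, ℂ) ↦ h κ) (Ring.inverse_mul_cancel g hg))

variable [CompactSpace K]

theorem analyticAt_ringInverse_continuousMap {φ : E → C(K, ℂ)} {x : E} (hφ : AnalyticAt ℂ φ x)
    (hx : ∀ κ, φ x κ ≠ 0) : AnalyticAt ℂ (fun y ↦ Ring.inverse (φ y)) x := by
  obtain ⟨u, hu⟩ := (ContinuousMap.isUnit_iff_forall_ne_zero (φ x)).2 hx
  exact (hu ▸ analyticAt_inverse (𝕜 := ℂ) u).comp hφ

variable [SecondCountableTopology K] [MeasurableSpace K] [BorelSpace K]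
  {μ : Measure K} [IsFiniteMeasure μ]

theorem analyticAt_integral_smul {φ : E → C(K, ℂ)} {x : E} (hφ : AnalyticAt ℂ φ x)
    (g : C(K, F)) : AnalyticAt ℂ (fun y ↦ ∫ κ, φ y κ • g κ ∂μ) x := by
  have hint (ψ : C(K, ℂ)) : Integrable (fun κ ↦ ψ κ • g κ) μ :=
    .of_bound (by fun_prop) (‖ψ‖ * ‖g‖) (ae_of_all _ fun κ ↦ by
      rw [norm_smul]
      gcongr
      exacts [ψ.norm_coe_le_norm κ, g.norm_coe_le_norm κ])
  let T : C(K, ℂ) →L[ℂ] F := LinearMap.mkContinuous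
    { toFun := fun ψ ↦ ∫ κ, ψ κ • g κ ∂μ
      map_add' := fun ψ₁ ψ₂ ↦ by
        simp only [ContinuousMap.add_apply, add_smul]
        exact integral_add (hint ψ₁) (hint ψ₂)
      map_smul' := fun r ψ ↦ by
        simp only [ContinuousMap.smul_apply, smul_assoc, integral_smul, RingHom.id_apply] }
    (‖g‖ * μ.real Set.univ) fun ψ ↦ by
      rw [mul_right_comm]
      refine norm_integral_le_of_norm_le_const (ae_of_all _ fun κ ↦ ?_)
      rw [norm_smul, mul_comm]
      gcongr
      exacts [g.norm_coe_le_norm κ, ψ.norm_coe_le_norm κ]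
  exact (T.analyticAt _).comp hφ

theorem analyticAt_integral_prod_sub_inv_smul {ι : Type*} [Fintype ι] (ζ : C(K, ι → ℂ))
    (g : C(K, F)) {w₀ : ι → ℂ} (hw₀ : ∀ κ i, ζ κ i ≠ w₀ i) :
    AnalyticAt ℂ (fun w : ι → ℂ ↦ ∫ κ, (∏ i, (ζ κ i - w i)⁻¹) • g κ ∂μ) w₀ := by
  let φ (i : ι) (w : ι → ℂ) : C(K, ℂ) := ⟨fun κ ↦ ζ κ i, by fun_prop⟩ - w i • 1
  have hφ (i : ι) : AnalyticAt ℂ (φ i) w₀ :=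
    analyticAt_const.sub
      (((ContinuousLinearMap.proj (R := ℂ) (φ := fun _ : ι ↦ ℂ) i).analyticAt w₀).smul
        analyticAt_const)
  have happly (i : ι) (w : ι → ℂ) (κ : K) : φ i w κ = ζ κ i - w i := by simp [φ]
  have hne (i : ι) (κ : K) : φ i w₀ κ ≠ 0 := happly i w₀ κ ▸ sub_ne_zero.2 (hw₀ κ i)
  have hunit : ∀ᶠ w in 𝓝 w₀, ∀ i, IsUnit (φ i w) := eventually_all.2 fun i ↦
    (hφ i).continuousAt.eventually_mem (Units.isOpen.mem_nhds
      ((ContinuousMap.isUnit_iff_forall_ne_zero _).2 (hne i)))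
  have hkernel : AnalyticAt ℂ (fun w ↦ ∏ i, Ring.inverse (φ i w)) w₀ :=
    Finset.univ.analyticAt_fun_prod fun i _ ↦ analyticAt_ringInverse_continuousMap (hφ i) (hne i)
  refine (analyticAt_integral_smul (μ := μ) hkernel g).congr ?_
  filter_upwards [hunit] with w hw
  refine integral_congr_ae (ae_of_all _ fun κ ↦ ?_)
  simp only [ContinuousMap.prod_apply, ringInverse_continuousMap_apply (hw _), happly]

end CompactParameter

section Polydisc

variable {n : ℕ} {c w : Fin n → ℂ} {R : Fin n → ℝ}

theorem continuous_torusMap (c : Fin n → ℂ) (R : Fin n → ℝ) : Continuous (torusMap c R) := by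
  unfold torusMap
  fun_prop

theorem torusMap_mem_pi_sphere (hR : ∀ i, 0 ≤ R i) (θ : Fin n → ℝ) :
    torusMap c R θ ∈ Set.univ.pi fun i ↦ sphere (c i) (R i) :=
  fun i _ ↦ circleMap_mem_sphere (c i) (hR i) (θ i)

theorem continuous_comp_torusMap {X : Type*} [TopologicalSpace X] {f : (Fin n → ℂ) → X}
    (hR : ∀ i, 0 ≤ R i) (hf : ContinuousOn f (Set.univ.pi fun i ↦ sphere (c i) (R i))) :
    Continuous fun θ ↦ f (torusMap c R θ) :=
  hf.comp_continuous (continuous_torusMap c R) (torusMap_mem_pi_sphere hR)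

theorem continuousOn_prod_sub_inv (hw : ∀ i, w i ∈ ball (c i) (R i)) :
    ContinuousOn (fun ζ : Fin n → ℂ ↦ ∏ i, (ζ i - w i)⁻¹)
      (Set.univ.pi fun i ↦ sphere (c i) (R i)) :=
  continuousOn_finsetProd _ fun i _ ↦ ContinuousOn.inv₀ (by fun_prop) fun ζ hζ ↦
    sub_ne_zero.2 (ne_of_mem_of_not_mem (hζ i trivial) fun h ↦
      (mem_ball.1 (hw i)).ne (mem_sphere.1 h))

variable {f : (Fin n → ℂ) → F}

theorem torusIntegrable_prod_sub_inv_smul (hw : ∀ i, w i ∈ ball (c i) (R i))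
    (hf : ContinuousOn f (Set.univ.pi fun i ↦ sphere (c i) (R i))) :
    TorusIntegrable (fun ζ ↦ (∏ i, (ζ i - w i)⁻¹) • f ζ) c R :=
  (continuous_comp_torusMap (fun i ↦ dist_nonneg.trans (mem_ball.1 (hw i)).le)
    ((continuousOn_prod_sub_inv hw).smul hf)).continuousOn.integrableOn_compact isCompact_Icc

theorem analyticAt_torusIntegral_prod_sub_inv_smul (hw : ∀ i, w i ∈ ball (c i) (R i))
    (hf : ContinuousOn f (Set.univ.pi fun i ↦ sphere (c i) (R i))) :
    AnalyticAt ℂ (fun w ↦ ∯ ζ in T(c, R), (∏ i, (ζ i - w i)⁻¹) • f ζ) w := by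
  have hR (i) : 0 ≤ R i := dist_nonneg.trans (mem_ball.1 (hw i)).le
  let K : Set (Fin n → ℝ) := Set.Icc 0 fun _ ↦ 2 * Real.pi
  have : CompactSpace K := isCompact_iff_compactSpace.1 isCompact_Icc
  have : IsFiniteMeasure (volume.comap ((↑) : K → Fin n → ℝ)) := ⟨by
    rw [(MeasurableEmbedding.subtype_coe measurableSet_Icc).comap_apply, Subtype.coe_image_univ]
    exact measure_Icc_lt_top⟩
  let ζ : C(K, Fin n → ℂ) :=
    ⟨fun θ ↦ torusMap c R θ, (continuous_torusMap c R).comp continuous_subtype_val⟩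
  have hg : Continuous fun θ : Fin n → ℝ ↦
      (∏ i, (R i : ℂ) * Complex.exp (θ i * Complex.I) * Complex.I) • f (torusMap c R θ) :=
    .smul (by fun_prop) (continuous_comp_torusMap hR hf)
  let g : C(K, F) := ⟨_, hg.comp continuous_subtype_val⟩
  have hζ (θ : K) (i : Fin n) : ζ θ i ≠ w i := fun h ↦
    (mem_ball.1 (hw i)).ne (h ▸ mem_sphere.1 (torusMap_mem_pi_sphere hR (θ : Fin n → ℝ) i trivial))
  refine (analyticAt_integral_prod_sub_inv_smul (μ := volume.comap ((↑) : K → Fin n → ℝ))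
    ζ g hζ).congr (.of_forall fun w ↦ ?_)
  simp only [torusIntegral]
  rw [← integral_subtype_comap measurableSet_Icc]
  exact integral_congr_ae (ae_of_all _ fun θ ↦ smul_comm _ _ _)

variable [CompleteSpace F]

theorem torusIntegral_prod_sub_inv_smul (hw : ∀ i, w i ∈ ball (c i) (R i))
    (hf : DifferentiableOn ℂ f (Set.univ.pi fun i ↦ closedBall (c i) (R i))) :
    (∯ ζ in T(c, R), (∏ i, (ζ i - w i)⁻¹) • f ζ) = (2 * Real.pi * Complex.I : ℂ) ^ n • f w := by
  induction n with
  | zero => simp [Subsingleton.elim c w]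
  | succ n ih =>
    have hint := torusIntegrable_prod_sub_inv_smul hw
      (hf.continuousOn.mono (Set.pi_mono fun _ _ ↦ sphere_subset_closedBall))
    have hcons {x : ℂ} {y : Fin n → ℂ} (hx : x ∈ closedBall (c 0) (R 0))
        (hy : ∀ i, y i ∈ closedBall (c i.succ) (R i.succ)) :
        (Fin.cons x y : Fin (n + 1) → ℂ) ∈ Set.univ.pi fun i ↦ closedBall (c i) (R i) :=
      fun i _ ↦ Fin.cases hx hy i
    have hinner : Set.EqOn
        (fun x ↦ ∯ y in T(c ∘ Fin.succ, R ∘ Fin.succ),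
          (∏ i, ((Fin.cons x y : Fin (n + 1) → ℂ) i - w i)⁻¹) • f (Fin.cons x y))
        (fun x ↦ (2 * Real.pi * Complex.I : ℂ) ^ n • (x - w 0)⁻¹ • f (Fin.cons x (Fin.tail w)))
        (sphere (c 0) (R 0)) := by
      intro x hx
      have hfx : DifferentiableOn ℂ (fun y : Fin n → ℂ ↦ f (Fin.cons x y))
          (Set.univ.pi fun i ↦ closedBall ((c ∘ Fin.succ) i) ((R ∘ Fin.succ) i)) :=
        hf.comp (by fun_prop) fun y hy ↦
          hcons (sphere_subset_closedBall hx) fun i ↦ hy i trivial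
      simp only [Fin.prod_univ_succ, Fin.cons_zero, Fin.cons_succ, mul_smul]
      rw [torusIntegral_smul, smul_comm, ← ih (w := Fin.tail w) (fun i ↦ hw i.succ) hfx]
      rfl
    have houter : DifferentiableOn ℂ (fun x : ℂ ↦ f (Fin.cons x (Fin.tail w)))
        (closedBall (c 0) (R 0)) :=
      hf.comp (by fun_prop) fun x hx ↦ hcons hx fun i ↦ ball_subset_closedBall (hw i.succ)
    rw [torusIntegral_succ hint,
      circleIntegral.integral_congr (dist_nonneg.trans (mem_ball.1 (hw 0)).le) hinner,
      circleIntegral.integral_smul, houter.circleIntegral_sub_inv_smul (hw 0), smul_smul,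
      ← pow_succ, Fin.cons_self_tail]

theorem analyticAt_of_differentiableOn_closedBall {r : ℝ} (hr : 0 < r)
    (hf : DifferentiableOn ℂ f (closedBall c r)) : AnalyticAt ℂ f c := by
  rw [closedBall_pi _ hr.le] at hf
  have hcauchy := (analyticAt_torusIntegral_prod_sub_inv_smul (fun i ↦ mem_ball_self hr)
    (hf.continuousOn.mono (Set.pi_mono fun _ _ ↦ sphere_subset_closedBall))).const_smul
      (c := ((2 * Real.pi * Complex.I : ℂ) ^ n)⁻¹)
  refine hcauchy.congr ?_
  filter_upwards [ball_mem_nhds c hr] with w hw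
  rw [ball_pi _ hr] at hw
  rw [Pi.smul_apply, torusIntegral_prod_sub_inv_smul (fun i ↦ hw i trivial) hf,
    inv_smul_smul₀ (pow_ne_zero _ Complex.two_pi_I_ne_zero)]

end Polydisc

theorem analyticAt_of_eventually_differentiableAt [FiniteDimensional ℂ E] [CompleteSpace F]
    {f : E → F} {a : E} (hf : ∀ᶠ z in 𝓝 a, DifferentiableAt ℂ f z) : AnalyticAt ℂ f a := by
  let e : E ≃L[ℂ] (Fin (Module.finrank ℂ E) → ℂ) := .ofFinrankEq (by simp)
  have hf' : ∀ᶠ w in 𝓝 (e a), DifferentiableAt ℂ f (e.symm w) :=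
    e.symm.continuous.continuousAt.eventually (by simpa using hf)
  obtain ⟨r, hr, hball⟩ := nhds_basis_closedBall.eventually_iff.1 hf'
  have han : AnalyticAt ℂ (f ∘ e.symm) (e a) :=
    analyticAt_of_differentiableOn_closedBall hr fun w hw ↦
      ((hball hw).comp w e.symm.differentiableAt).differentiableWithinAt
  simpa [Function.comp_def] using
    han.comp ((e : E →L[ℂ] Fin (Module.finrank ℂ E) → ℂ).analyticAt a)

end Osgood

section LeadingForm

variable {E F : Type*} [NormedAddCommGroup E] [NormedSpace ℝ E] [NormedAddCommGroup F]
  [NormedSpace ℝ F]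

theorem tendsto_add_smul_nhdsGT_prod_nhds (a v : E) :
    Tendsto (fun q : ℝ × E ↦ a + q.1 • q.2) (𝓝[>] 0 ×ˢ 𝓝 v) (𝓝 a) :=
  ((by fun_prop : Continuous fun q : ℝ × E ↦ a + q.1 • q.2).tendsto' (0, v) a (by simp)).mono_left
    (nhds_prod_eq (x := (0 : ℝ)) (y := v) ▸ prod_mono_left _ nhdsWithin_le_nhds)

open scoped Pointwise in
theorem image_add_smul_ball (a v : E) {t : ℝ} (ht : 0 < t) (s : ℝ) :
    (fun z ↦ a + t • z) '' ball v s = ball (a + t • v) (t * s) :=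
  calc (fun z ↦ a + t • z) '' ball v s = a +ᵥ t • ball v s := by
        simp only [← Set.image_smul, ← Set.image_vadd, Set.image_image, vadd_eq_add]
    _ = ball (a + t • v) (t * s) := by
        rw [_root_.smul_ball ht.ne', vadd_ball, vadd_eq_add, Real.norm_of_nonneg ht.le]

theorem tendsto_inv_pow_smul_of_isLittleO {f P : E → F} {a v : E} {k : ℕ}
    (hf : (fun z ↦ f (a + z) - P z) =o[𝓝 0] fun z ↦ ‖z‖ ^ k)
    (hP : ∀ t : ℝ, 0 < t → ∀ z, P (t • z) = t ^ k • P z) (hv : ContinuousAt P v) :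
    Tendsto (fun q : ℝ × E ↦ (q.1 ^ k)⁻¹ • f (a + q.1 • q.2)) (𝓝[>] 0 ×ˢ 𝓝 v) (𝓝 (P v)) := by
  have hsmul : Tendsto (fun q : ℝ × E ↦ q.1 • q.2) (𝓝[>] 0 ×ˢ 𝓝 v) (𝓝 0) := by
    simpa only [zero_add] using tendsto_add_smul_nhdsGT_prod_nhds 0 v
  have hbound : (fun q : ℝ × E ↦ ‖q.1 • q.2‖ ^ k) =O[𝓝[>] 0 ×ˢ 𝓝 v] fun q ↦ q.1 ^ k := by
    have hsnd : (fun q : ℝ × E ↦ ‖q.2‖) =O[𝓝[>] 0 ×ˢ 𝓝 v] fun _ ↦ (1 : ℝ) :=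
      tendsto_snd.norm.isBigO_one ℝ
    simpa [norm_smul] using (((isBigO_refl Prod.fst _).norm_left.mul hsnd).pow k)
  have herror : Tendsto (fun q : ℝ × E ↦ (q.1 ^ k)⁻¹ • (f (a + q.1 • q.2) - P (q.1 • q.2)))
      (𝓝[>] 0 ×ˢ 𝓝 v) (𝓝 0) :=
    ((hf.comp_tendsto hsmul).trans_isBigO hbound).tendsto_inv_smul_nhds_zero
  have hlim := herror.add (hv.tendsto.comp tendsto_snd)
  rw [zero_add] at hlim
  refine hlim.congr' ?_
  filter_upwards [tendsto_fst.eventually self_mem_nhdsWithin] with q hq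
  rw [hP _ hq, smul_sub, inv_smul_smul₀ (pow_ne_zero k (ne_of_gt hq)), Function.comp_apply,
    sub_add_cancel]

theorem eventually_norm_pos_and_le_of_isLittleO {f P : E → F} {a v : E} {k : ℕ}
    (hf : (fun z ↦ f (a + z) - P z) =o[𝓝 0] fun z ↦ ‖z‖ ^ k)
    (hP : ∀ t : ℝ, 0 < t → ∀ z, P (t • z) = t ^ k • P z) (hv : ContinuousAt P v)
    (hPv : P v ≠ 0) :
    ∀ᶠ q : ℝ × E in 𝓝[>] 0 ×ˢ 𝓝 v,
      0 < ‖f (a + q.1 • q.2)‖ ∧ ‖f (a + q.1 • q.2)‖ ≤ (‖P v‖ + 1) * q.1 ^ k := by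
  have hlim := tendsto_inv_pow_smul_of_isLittleO hf hP hv
  filter_upwards [hlim.eventually_ne hPv, hlim.norm.eventually_le_const (lt_add_one _),
    tendsto_fst.eventually self_mem_nhdsWithin] with q hne hle hq
  have hpow : 0 < q.1 ^ k := pow_pos hq k
  refine ⟨norm_pos_iff.2 (right_ne_zero_of_smul hne), ?_⟩
  rwa [norm_smul, norm_inv, Real.norm_of_nonneg hpow.le, inv_mul_le_iff₀ hpow, mul_comm] at hle

end LeadingForm

section HaarMeasure

variable {E : Type*} [NormedAddCommGroup E] [NormedSpace ℝ E] [FiniteDimensional ℝ E]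
  [MeasurableSpace E] [BorelSpace E] {μ : Measure E} [μ.IsAddHaarMeasure]

theorem addHaar_real_ball_mul_of_pos (x : E) {t : ℝ} (ht : 0 < t) (s : ℝ) :
    μ.real (ball x (t * s)) = t ^ Module.finrank ℝ E * μ.real (ball 0 s) := by
  rw [measureReal_def, Measure.addHaar_ball_mul_of_pos μ x ht, ENNReal.toReal_mul,
    ENNReal.toReal_ofReal (by positivity), measureReal_def]

theorem tendsto_addHaar_ball_nhdsGT_zero [Nontrivial E] (x : ℝ → E) (s : ℝ) :
    Tendsto (fun t ↦ μ (ball (x t) (t * s))) (𝓝[>] 0) (𝓝 0) := by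
  have hpow : Tendsto (fun t : ℝ ↦ ENNReal.ofReal (t ^ Module.finrank ℝ E) * μ (ball 0 s))
      (𝓝[>] 0) (𝓝 0) := by
    have hd : Tendsto (fun t : ℝ ↦ t ^ Module.finrank ℝ E) (𝓝[>] 0) (𝓝 0) :=
      ((continuous_pow _).tendsto' 0 0 (zero_pow Module.finrank_pos.ne')).mono_left
        nhdsWithin_le_nhds
    simpa using ENNReal.Tendsto.mul_const (ENNReal.tendsto_ofReal hd)
      (.inr (measure_ball_lt_top (μ := μ)).ne)
  refine hpow.congr' ?_
  filter_upwards [self_mem_nhdsWithin] with t ht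
  rw [Measure.addHaar_ball_mul_of_pos μ _ ht]

theorem le_setIntegral_rpow_neg_ball {g : E → ℝ} {x : E} {M p s t : ℝ} {k : ℕ}
    (hp : Module.finrank ℝ E ≤ p * k) (hp0 : 0 ≤ p) (ht0 : 0 < t) (ht1 : t ≤ 1) (hM : 0 < M)
    (hg : ∀ z ∈ ball x (t * s), 0 < g z ∧ g z ≤ M * t ^ k)
    (hint : IntegrableOn (fun z ↦ g z ^ (-p)) (ball x (t * s)) μ) :
    M ^ (-p) * μ.real (ball 0 s) ≤ ∫ z in ball x (t * s), g z ^ (-p) ∂μ :=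
  calc M ^ (-p) * μ.real (ball 0 s)
      ≤ M ^ (-p) * t ^ (Module.finrank ℝ E - p * k : ℝ) * μ.real (ball 0 s) := by
        gcongr
        exact le_mul_of_one_le_right (by positivity)
          (Real.one_le_rpow_of_pos_of_le_one_of_nonpos ht0 ht1 (sub_nonpos.2 hp))
    _ = (M * t ^ k) ^ (-p) * μ.real (ball x (t * s)) := by
        rw [addHaar_real_ball_mul_of_pos x ht0, Real.mul_rpow hM.le (by positivity),
          ← Real.rpow_natCast_mul ht0.le, sub_eq_neg_add, Real.rpow_add ht0, Real.rpow_natCast]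
        ring_nf
    _ ≤ ∫ z in ball x (t * s), g z ^ (-p) ∂μ :=
        setIntegral_ge_of_const_le_real measurableSet_ball measure_ball_lt_top.ne
          (fun z hz ↦ Real.rpow_le_rpow_of_nonpos (hg z hz).1 (hg z hz).2 (neg_nonpos.2 hp0)) hint

theorem not_integrableAtFilter_rpow_neg_nhds [Nontrivial E] {g : E → ℝ} {a v : E} {M p : ℝ}
    {k : ℕ} (hp : Module.finrank ℝ E ≤ p * k)
    (hg : ∀ᶠ q : ℝ × E in 𝓝[>] 0 ×ˢ 𝓝 v,
      0 < g (a + q.1 • q.2) ∧ g (a + q.1 • q.2) ≤ M * q.1 ^ k) :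
    ¬ IntegrableAtFilter (fun z ↦ g z ^ (-p)) (𝓝 a) μ := by
  rintro ⟨V, hV, hint⟩
  have hd : (0 : ℝ) < Module.finrank ℝ E := mod_cast Module.finrank_pos
  have hp0 : 0 ≤ p := le_of_lt (pos_of_mul_pos_left (hd.trans_le hp) k.cast_nonneg)
  have hM : 0 < M := by
    obtain ⟨q, ⟨hpos, hle⟩, hq⟩ := (hg.and (tendsto_fst.eventually self_mem_nhdsWithin)).exists
    exact pos_of_mul_pos_left (hpos.trans_le hle) (pow_pos hq k).le
  obtain ⟨T, hT, S, hS, hTS⟩ := eventually_prod_iff.1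
    (((tendsto_add_smul_nhdsGT_prod_nhds a v).eventually_mem hV).and hg)
  obtain ⟨s, hs, hsS⟩ := eventually_nhds_iff_ball.1 hS
  have hlower : ∀ᶠ t : ℝ in 𝓝[>] 0, M ^ (-p) * μ.real (ball 0 s) ≤
      ∫ z in ball (a + t • v) (t * s), g z ^ (-p) ∂μ.restrict V := by
    filter_upwards [hT, Ioc_mem_nhdsGT zero_lt_one] with t htT ⟨ht0, ht1⟩
    have hball : ∀ z ∈ ball (a + t • v) (t * s), z ∈ V ∧ 0 < g z ∧ g z ≤ M * t ^ k := by
      rw [← image_add_smul_ball a v ht0, Set.forall_mem_image]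
      exact fun z hz ↦ hTS htT (hsS z hz)
    have hsub : ball (a + t • v) (t * s) ⊆ V := fun z hz ↦ (hball z hz).1
    rw [Measure.restrict_restrict_of_subset hsub]
    exact le_setIntegral_rpow_neg_ball hp hp0 ht0 ht1 hM (fun z hz ↦ (hball z hz).2)
      (hint.mono_set hsub)
  have hzero : Tendsto (fun t : ℝ ↦ ∫ z in ball (a + t • v) (t * s), g z ^ (-p) ∂μ.restrict V)
      (𝓝[>] 0) (𝓝 0) :=
    hint.tendsto_setIntegral_nhds_zero <| tendsto_of_tendsto_of_tendsto_of_le_of_le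
      tendsto_const_nhds (tendsto_addHaar_ball_nhdsGT_zero (μ := μ) (fun t ↦ a + t • v) s)
      (fun _ ↦ zero_le) fun _ ↦ Measure.restrict_apply_le _ _
  have hball0 : 0 < μ.real (ball (0 : E) s) :=
    ENNReal.toReal_pos (measure_ball_pos μ 0 hs).ne' measure_ball_lt_top.ne
  exact (ge_of_tendsto hzero hlower).not_gt (by positivity)

end HaarMeasure

section Analytic

variable {𝕜 E F : Type*} [NontriviallyNormedField 𝕜] [CharZero 𝕜] [NormedAddCommGroup E]
  [NormedSpace 𝕜 E] [NormedAddCommGroup F] [NormedSpace 𝕜 F] [CompleteSpace F]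
  {f : E → F} {a : E} {k : ℕ}

theorem coeff_diagonal_eq_inv_factorial_smul {p : FormalMultilinearSeries 𝕜 E F} {r : ENNReal}
    (hp : HasFPowerSeriesOnBall f p a r) (z : E) :
    (p k fun _ ↦ z) = (k.factorial : 𝕜)⁻¹ • iteratedFDeriv 𝕜 k f a fun _ ↦ z := by
  rw [eq_inv_smul_iff₀ (mod_cast k.factorial_ne_zero), Nat.cast_smul_eq_nsmul, hp.factorial_smul]

theorem isLittleO_sub_iteratedFDeriv_diagonal (hf : AnalyticAt 𝕜 f a)
    (hlt : ∀ j < k, iteratedFDeriv 𝕜 j f a = 0) :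
    (fun z ↦ f (a + z) - (k.factorial : 𝕜)⁻¹ • iteratedFDeriv 𝕜 k f a fun _ ↦ z)
      =o[𝓝 0] fun z ↦ ‖z‖ ^ k := by
  obtain ⟨p, r, hp⟩ := hf
  have hpartial (z : E) : p.partialSum (k + 1) z =
      (k.factorial : 𝕜)⁻¹ • iteratedFDeriv 𝕜 k f a fun _ ↦ z := by
    rw [FormalMultilinearSeries.partialSum, Finset.sum_range_succ,
      coeff_diagonal_eq_inv_factorial_smul hp, add_eq_right]
    exact Finset.sum_eq_zero fun j hj ↦ by
      simp [coeff_diagonal_eq_inv_factorial_smul hp, hlt j (Finset.mem_range.1 hj)]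
  simp only [← hpartial]
  exact (hp.hasFPowerSeriesAt.isBigO_sub_partialSum_pow (k + 1)).trans_isLittleO
    ((isLittleO_pow_pow k.lt_succ_self).comp_tendsto tendsto_norm_zero)

theorem exists_iteratedFDeriv_diagonal_ne_zero (hf : AnalyticAt 𝕜 f a)
    (hne : iteratedFDeriv 𝕜 k f a ≠ 0) : ∃ v, iteratedFDeriv 𝕜 k f a (fun _ ↦ v) ≠ 0 := by
  contrapose! hne with hdiag
  obtain ⟨p, r, hp⟩ := hf
  have hterm : (fun z ↦ p k fun _ ↦ z) = 0 := by
    ext z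
    simp [coeff_diagonal_eq_inv_factorial_smul hp, hdiag]
  ext w
  -- Polarization: the `k`-th derivative of the diagonal form is its symmetrization.
  rw [hp.iteratedFDeriv_eq_sum_of_completeSpace, ← (p k).iteratedFDeriv_comp_diagonal 0 w, hterm]
  simp

end Analytic

section SingularityExponent

variable {E F : Type*} [NormedAddCommGroup E] [Nontrivial E] [MeasurableSpace E] [BorelSpace E]
  [NormedAddCommGroup F] [CompleteSpace F] {f : E → F} {a : E} {k : ℕ}
  {μ : Measure E} [μ.IsAddHaarMeasure]

theorem not_integrableAtFilter_norm_rpow_neg_of_analyticAt {𝕜 : Type*} [RCLike 𝕜]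
    [NormedSpace 𝕜 E] [NormedSpace ℝ E] [IsScalarTower ℝ 𝕜 E] [FiniteDimensional ℝ E]
    [NormedSpace 𝕜 F] (hf : AnalyticAt 𝕜 f a)
    (horder_lt : ∀ j < k, iteratedFDeriv 𝕜 j f a = 0) (horder_ne : iteratedFDeriv 𝕜 k f a ≠ 0)
    {p : ℝ} (hp : Module.finrank ℝ E ≤ p * k) :
    ¬ IntegrableAtFilter (fun z ↦ ‖f z‖ ^ (-p)) (𝓝 a) μ := by
  let : NormedSpace ℝ F := .restrictScalars ℝ 𝕜 F
  have : IsScalarTower ℝ 𝕜 F := .restrictScalars ℝ 𝕜 F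
  let P (z : E) : F := (k.factorial : 𝕜)⁻¹ • iteratedFDeriv 𝕜 k f a fun _ ↦ z
  have hPhom (t : ℝ) (_ : 0 < t) (z : E) : P (t • z) = t ^ k • P z := by
    have hsmul := (iteratedFDeriv 𝕜 k f a).map_smul_univ (fun _ ↦ (t : 𝕜)) fun _ ↦ z
    simp only [P, RCLike.real_smul_eq_coe_smul (K := 𝕜), hsmul, Fin.prod_const, RCLike.ofReal_pow,
      smul_comm (k.factorial : 𝕜)⁻¹]
  have hPcont : Continuous P := ((iteratedFDeriv 𝕜 k f a).cont.comp (by fun_prop)).const_smul _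
  obtain ⟨v, hv⟩ := exists_iteratedFDeriv_diagonal_ne_zero hf horder_ne
  have hPv : P v ≠ 0 := smul_ne_zero (inv_ne_zero (mod_cast k.factorial_ne_zero)) hv
  exact not_integrableAtFilter_rpow_neg_nhds hp (eventually_norm_pos_and_le_of_isLittleO
    (isLittleO_sub_iteratedFDeriv_diagonal hf horder_lt) hPhom hPcont.continuousAt hPv)

theorem singularity_exponent_le_two_inv_order_general [NormedSpace ℂ E] [FiniteDimensional ℂ E]
    [NormedSpace ℂ F] (hf : ∀ᶠ z in 𝓝 a, DifferentiableAt ℂ f z)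
    (horder_lt : ∀ j < k, iteratedFDeriv ℂ j f a = 0) (horder_ne : iteratedFDeriv ℂ k f a ≠ 0)
    {c : ℝ} (hc : Module.finrank ℂ E ≤ c * k) :
    ¬ IntegrableAtFilter (fun z ↦ ‖f z‖ ^ (-(2 * c))) (𝓝 a) μ := by
  have : FiniteDimensional ℝ E := .complexToReal E
  refine not_integrableAtFilter_norm_rpow_neg_of_analyticAt
    (analyticAt_of_eventually_differentiableAt hf) horder_lt horder_ne ?_
  rw [finrank_real_of_complex, Nat.cast_mul, mul_assoc, Nat.cast_ofNat]
  gcongr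

end SingularityExponent

/-- Upper bound of Lemma 4.3: if `f` is holomorphic near `0 ∈ ℂ²`, not identically
zero near `0`, with vanishing order `k ≥ 1` at `0`, then for every `c > 2/k`
the function `z ↦ ‖f z‖ ^ (-2c)` is not integrable on any open neighborhood of `0`;
in particular `c₀(f) ≤ 2/k`. -/
theorem singularity_exponent_le_two_inv_order
    (f : ℂ × ℂ → ℂ) (U : Set (ℂ × ℂ)) (hU : IsOpen U) (h0U : (0 : ℂ × ℂ) ∈ U)
    (hf : DifferentiableOn ℂ f U)
    (hnz : ¬ ∀ᶠ z in nhds (0 : ℂ × ℂ), f z = 0)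
    (k : ℕ) (hk : 1 ≤ k)
    (horder_lt : ∀ j < k, iteratedFDeriv ℂ j f 0 = 0)
    (horder_ne : iteratedFDeriv ℂ k f 0 ≠ 0)
    (c : ℝ) (hc : 2 / (k : ℝ) < c) :
    ∀ V : Set (ℂ × ℂ), IsOpen V → (0 : ℂ × ℂ) ∈ V →
      ¬ IntegrableOn (fun z => ‖f z‖ ^ (-(2 * c))) V volume := by
  intro V hV h0V hint
  have : (volume : Measure (ℂ × ℂ)).IsAddHaarMeasure :=
    inferInstanceAs (Measure.IsAddHaarMeasure (volume.prod volume))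
  have hck : (Module.finrank ℂ (ℂ × ℂ) : ℝ) ≤ c * k := by
    simpa using ((div_lt_iff₀ (by positivity)).1 hc).le
  exact singularity_exponent_le_two_inv_order_general
    (hf.eventually_differentiableAt (hU.mem_nhds h0U)) horder_lt horder_ne hck
    ⟨V, hV.mem_nhds h0V, hint⟩
end

section
/- Let f be a holomorphic function on an open neighborhood of 0 in ℂ², not identically zero near 0, with vanishing order k ≥ 1 at 0, and suppose its complex singularity exponent at 0 equals 1/k; that is, for every real c > 1/k the function z ↦ |f(z)|^{-2c} fails to be integrable on every open neighborhood of 0. Then f factors locally as f = g·h^k: there exist an open neighborhood V of 0 and holomorphic functions g, h on V with g(0) ≠ 0, h(0) = 0, h of vanishing order exactly 1 at 0, such that f(z) = g(z)·h(z)^k for all z ∈ V. (Equality case of Lemma 4.3.) -/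
open MeasureTheory

/-!
After a linear change of coordinates, `f (0, w)` vanishes to order exactly `k` at `w = 0`. For `z`
near `0`, `f (z, ·)` then has exactly `k` roots `aᵢ(z)` in a fixed disc, and by the generalized
argument principle the sum of `φ (z, aᵢ(z))` over them is holomorphic in `z` for every
holomorphic `φ`. Hence the barycentre `m(z)` of the roots and their centred power sums
`Qⱼ(z) = ∑ (aᵢ(z) - m(z)) ^ j` are holomorphic.

If `Q₁, …, Qₖ` vanish identically near `0`, all roots coincide and `f (z, w) = g * (w - m(z)) ^ k`
with `g` a unit. Otherwise some `|Qⱼ(z)|` is at least `κ |z| ^ N`, so the roots are spread out: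
every `w` has distance at least `κ' |z| ^ N` from one of them. Bounding a small power `s` of that
factor by `|z| ^ (-N s)` gives `|f| ^ (-p) ≤ C |z| ^ (-N s) ∑ |w - aᵢ(z)| ^ (-(p k - s))`, which is
integrable near `0` for some `p > 2 / k`.
-/

open Metric Set Filter Topology

section ParametricCircleIntegrals

variable {X : Type*} [TopologicalSpace X] [CompactSpace X]
  {E : Type*} [NormedAddCommGroup E] [NormedSpace ℂ E] {W : Set ℂ}

lemma analyticOnNhd_of_forall_eval [CompleteSpace E] (hW : IsOpen W) {Φ : ℂ → C(X, E)}
    (hΦ : ContinuousOn Φ W)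
    (heval : ∀ x, DifferentiableOn ℂ (fun z ↦ Φ z x) W) : AnalyticOnNhd ℂ Φ W := by
  intro z₀ hz₀
  obtain ⟨R, hR, hball⟩ := nhds_basis_closedBall.mem_iff.1 (hW.mem_nhds hz₀)
  lift R to NNReal using hR.le
  have hΦR : ContinuousOn Φ (sphere z₀ R) := hΦ.mono (sphere_subset_closedBall.trans hball)
  refine (hasFPowerSeriesOn_cauchy_integral (hΦR.circleIntegrable R.2)
    (by exact_mod_cast hR)).analyticAt.congr ?_
  filter_upwards [ball_mem_nhds z₀ hR] with w hw
  ext x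
  have hkernel : CircleIntegrable (fun z ↦ (z - w)⁻¹ • Φ z) z₀ R := by
    refine ((ContinuousOn.inv₀ (f := fun z ↦ z - w) (by fun_prop) fun z hz ↦
      sub_ne_zero.2 ?_).smul hΦR).circleIntegrable R.2
    rintro rfl
    exact (mem_ball.1 hw).ne (mem_sphere.1 hz)
  have heval_integral :
      (∮ z in C(z₀, R), (z - w)⁻¹ • Φ z) x = ∮ z in C(z₀, R), (z - w)⁻¹ • Φ z x :=
    ((ContinuousMap.evalCLM ℂ x).intervalIntegral_comp_comm hkernel.out).symm
  rw [ContinuousMap.smul_apply, heval_integral]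
  exact ((heval x).mono hball).diffContOnCl_ball subset_rfl
    |>.two_pi_i_inv_smul_circleIntegral_sub_inv_smul hw

lemma exists_analyticOnNhd_curry [CompleteSpace E] (hW : IsOpen W) {F : ℂ × X → E}
    (hF : ContinuousOn F (W ×ˢ univ)) (hd : ∀ x, DifferentiableOn ℂ (fun z ↦ F (z, x)) W) :
    ∃ Φ : ℂ → C(X, E), AnalyticOnNhd ℂ Φ W ∧ ∀ z ∈ W, ∀ x, Φ z x = F (z, x) := by
  classical
  have hslice : ∀ z ∈ W, Continuous fun x ↦ F (z, x) := fun z hz ↦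
    hF.comp_continuous (by fun_prop) fun _ ↦ ⟨hz, mem_univ _⟩
  let Φ : ℂ → C(X, E) := fun z ↦ if hz : z ∈ W then ⟨fun x ↦ F (z, x), hslice z hz⟩ else 0
  have hΦ : ∀ z ∈ W, ∀ x, Φ z x = F (z, x) := fun z hz x ↦ by simp [Φ, hz]
  refine ⟨Φ, analyticOnNhd_of_forall_eval hW ?_ fun x ↦ (hd x).congr fun z hz ↦ hΦ z hz x, hΦ⟩
  rw [continuousOn_iff_continuous_domRestrict]
  let G : C(W × X, E) := ⟨fun p ↦ F (p.1, p.2),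
    hF.comp_continuous (by fun_prop) fun p ↦ ⟨p.1.2, mem_univ _⟩⟩
  convert G.curry.continuous using 1
  ext z x
  simp [G, hΦ]

variable (E) in
/-- The circle integral `φ ↦ ∮ ζ in C(c, r), φ ζ` as a continuous linear map on the space of
continuous functions on the circle, written in the angular parametrization because `circleIntegral`
expects a function on all of `ℂ`. -/
noncomputable def circleIntegralCLM (c : ℂ) {r : ℝ} (hr : 0 ≤ r) : C(sphere c r, E) →L[ℂ] E :=
  LinearMap.mkContinuous
    { toFun := fun φ ↦ ∫ θ in (0 : ℝ)..2 * Real.pi,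
        deriv (circleMap c r) θ • φ ⟨circleMap c r θ, circleMap_mem_sphere c hr θ⟩
      map_add' := fun φ ψ ↦ by
        rw [← intervalIntegral.integral_add (Continuous.intervalIntegrable (by
          simp only [deriv_circleMap]; fun_prop) _ _) (Continuous.intervalIntegrable (by
          simp only [deriv_circleMap]; fun_prop) _ _)]
        simp only [ContinuousMap.add_apply, smul_add]
      map_smul' := fun a φ ↦ by
        simp only [ContinuousMap.smul_apply, RingHom.id_apply, smul_comm _ a,
          intervalIntegral.integral_smul] }
    (r * |2 * Real.pi - 0|) fun φ ↦ by
      calc _ ≤ r * ‖φ‖ * |2 * Real.pi - 0| :=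
            intervalIntegral.norm_integral_le_of_norm_le_const fun θ _ ↦ by
              rw [norm_smul, deriv_circleMap, norm_mul, norm_circleMap_zero, Complex.norm_I,
                mul_one, abs_of_nonneg hr]
              gcongr
              exact φ.norm_coe_le_norm _
        _ = _ := by ring

lemma circleIntegralCLM_apply {c : ℂ} {r : ℝ} (hr : 0 ≤ r) {φ : C(sphere c r, E)} {F : ℂ → E}
    (h : ∀ ζ, φ ζ = F ζ) : circleIntegralCLM E c hr φ = ∮ ζ in C(c, r), F ζ := by
  simp [circleIntegralCLM, circleIntegral, h]

lemma analyticOnNhd_circleIntegral_param [CompleteSpace E] (hW : IsOpen W) {c : ℂ} {r : ℝ}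
    (hr : 0 ≤ r) {F : ℂ × ℂ → E} (hF : ContinuousOn F (W ×ˢ sphere c r))
    (hd : ∀ ζ ∈ sphere c r, DifferentiableOn ℂ (fun z ↦ F (z, ζ)) W) :
    AnalyticOnNhd ℂ (fun z ↦ ∮ ζ in C(c, r), F (z, ζ)) W := by
  obtain ⟨Φ, hΦ, hΦF⟩ := exists_analyticOnNhd_curry (X := sphere c r) hW
    (F := fun p ↦ F (p.1, p.2)) (hF.comp (by fun_prop) fun p hp ↦ ⟨hp.1, p.2.2⟩)
    fun ζ ↦ hd ζ ζ.2
  intro z hz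
  refine ((circleIntegralCLM E c hr).analyticAt _ |>.fun_comp (hΦ z hz)).congr ?_
  filter_upwards [hW.mem_nhds hz] with z' hz'
  exact circleIntegralCLM_apply hr (hΦF z' hz')

lemma analyticAt_circleIntegral_param [CompleteSpace E] {c z₀ : ℂ} {r : ℝ} (hr : 0 ≤ r)
    {F : ℂ × ℂ → E} (hF : ∀ ζ ∈ sphere c r, AnalyticAt ℂ F (z₀, ζ)) :
    AnalyticAt ℂ (fun z ↦ ∮ ζ in C(c, r), F (z, ζ)) z₀ := by
  have hev : ∀ᶠ z in 𝓝 z₀, ∀ ζ ∈ sphere c r, AnalyticAt ℂ F (z, ζ) :=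
    (isCompact_sphere c r).eventually_forall_of_forall_eventually fun ζ hζ ↦
      (hF ζ hζ).eventually_analyticAt
  obtain ⟨W, hWF, hW, hz₀⟩ := _root_.eventually_nhds_iff.1 hev
  refine analyticOnNhd_circleIntegral_param hW hr
    (fun p hp ↦ (hWF p.1 hp.1 p.2 hp.2).continuousAt.continuousWithinAt)
    (fun ζ hζ z hz ↦ ?_) z₀ hz₀
  exact ((hWF z hz ζ hζ).differentiableAt.fun_comp' z (by fun_prop)).differentiableWithinAt

/-- Cauchy's formula in the second variable expresses `F` through its values on `W × ∂B`, where the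
integrand is holomorphic in both parameters; no regularity of `F` in the first variable is assumed
in the interior of the disc. -/
theorem analyticOnNhd_prod_ball_of_sphere (hW : IsOpen W) {c : ℂ} {r : ℝ} {F : ℂ × ℂ → ℂ}
    (hF : ContinuousOn F (W ×ˢ sphere c r))
    (hfst : ∀ ζ ∈ sphere c r, DifferentiableOn ℂ (fun z ↦ F (z, ζ)) W)
    (hsnd : ∀ z ∈ W, DiffContOnCl ℂ (fun w ↦ F (z, w)) (ball c r)) :
    AnalyticOnNhd ℂ F (W ×ˢ ball c r) := by
  rintro ⟨z, w⟩ ⟨hz, hw⟩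
  have hr : 0 ≤ r := (pos_of_mem_ball hw).le
  have hne : ∀ w ∈ ball c r, ∀ ζ : sphere c r, (ζ : ℂ) - w ≠ 0 := fun w hw ζ h ↦
    (mem_ball.1 hw).ne (sub_eq_zero.1 h ▸ mem_sphere.1 ζ.2)
  obtain ⟨Φ, hΦ, hΦF⟩ := exists_analyticOnNhd_curry (X := sphere c r) hW
    (F := fun p ↦ F (p.1, p.2)) (hF.comp (by fun_prop) fun p hp ↦ ⟨hp.1, p.2.2⟩)
    fun ζ ↦ hfst ζ ζ.2
  obtain ⟨K, hK, hKF⟩ := exists_analyticOnNhd_curry (X := sphere c r)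
    (isOpen_ball (x := c) (ε := r)) (F := fun p ↦ ((p.2 : ℂ) - p.1)⁻¹)
    (ContinuousOn.inv₀ (by fun_prop) fun p hp ↦ hne p.1 hp.1 p.2)
    fun ζ ↦ DifferentiableOn.inv (h := fun w ↦ (ζ : ℂ) - w) (by fun_prop) fun w hw ↦ hne w hw ζ
  have hintegrand : AnalyticAt ℂ (fun p : ℂ × ℂ ↦ K p.2 * Φ p.1) (z, w) :=
    (AnalyticAt.fun_comp (g := K) (hK w hw) analyticAt_snd).mul
      (AnalyticAt.fun_comp (g := Φ) (hΦ z hz) analyticAt_fst)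
  refine (analyticAt_const (v := (2 * Real.pi * Complex.I : ℂ)⁻¹) |>.smul <|
    (circleIntegralCLM ℂ c hr).analyticAt _ |>.fun_comp hintegrand).congr ?_
  filter_upwards [(hW.prod isOpen_ball).mem_nhds ⟨hz, hw⟩] with p hp
  have hcauchy : circleIntegralCLM ℂ c hr (K p.2 * Φ p.1) =
      ∮ ζ in C(c, r), (ζ - p.2)⁻¹ • F (p.1, ζ) :=
    circleIntegralCLM_apply hr fun ζ ↦ by simp [hΦF p.1 hp.1, hKF p.2 hp.2]
  simpa only [Pi.smul_apply', hcauchy] using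
    (hsnd p.1 hp.1).two_pi_i_inv_smul_circleIntegral_sub_inv_smul hp.2

/-- Osgood's lemma. -/
theorem analyticOnNhd_of_differentiableOn_prod {U : Set (ℂ × ℂ)} (hU : IsOpen U) {f : ℂ × ℂ → ℂ}
    (hf : DifferentiableOn ℂ f U) : AnalyticOnNhd ℂ f U := by
  rintro ⟨z, w⟩ hzw
  obtain ⟨r, hr, hball⟩ := nhds_basis_closedBall.mem_iff.1 (hU.mem_nhds hzw)
  rw [← closedBall_prod_same] at hball
  have hmem : ∀ z' ∈ ball z r, ∀ w' ∈ closedBall w r, (z', w') ∈ U := fun z' hz' w' hw' ↦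
    hball ⟨ball_subset_closedBall hz', hw'⟩
  refine analyticOnNhd_prod_ball_of_sphere (isOpen_ball (x := z) (ε := r)) (c := w) (r := r)
    (hf.continuousOn.mono fun p hp ↦ hmem p.1 hp.1 p.2 (sphere_subset_closedBall hp.2))
    (fun ζ hζ ↦ hf.comp (by fun_prop) fun z' hz' ↦ hmem z' hz' ζ (sphere_subset_closedBall hζ))
    (fun z' hz' ↦ ?_) (z, w) ⟨mem_ball_self hr, mem_ball_self hr⟩
  exact (hf.comp (f := fun w' ↦ (z', w')) (by fun_prop) (hmem z' hz')).diffContOnCl_ball subset_rfl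

end ParametricCircleIntegrals

section RootFactorization

lemma exists_finprod_zpow_eq_prod_sub {D : ℂ → ℤ} (hD : 0 ≤ D) (hfin : D.support.Finite) :
    ∃ (n : ℕ) (a : Fin n → ℂ), (∀ i, a i ∈ D.support) ∧
      ∏ᶠ u, (· - u) ^ D u = fun w ↦ ∏ i, (w - a i) := by
  let ι := Σ u : hfin.toFinset, Fin (D u).toNat
  let e : ι ≃ Fin (Fintype.card ι) := Fintype.equivFin ι
  refine ⟨_, fun i ↦ (e.symm i).1, fun i ↦ hfin.mem_toFinset.1 (e.symm i).1.2, ?_⟩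
  ext w
  have hsupport : Function.mulSupport (fun u ↦ (· - u) ^ D u) ⊆ hfin.toFinset := by
    rw [Function.FactorizedRational.mulSupport, hfin.coe_toFinset]
  rw [e.symm.prod_comp fun i : ι ↦ w - i.1, Fintype.prod_sigma,
    finprod_eq_prod_of_mulSupport_subset _ hsupport, Finset.prod_apply, ← Finset.prod_coe_sort]
  refine Finset.prod_congr rfl fun u _ ↦ ?_
  have hu : max (D u) 0 = D u := max_eq_left (hD u)
  simp [← zpow_natCast, hu]

theorem exists_eventually_eq_prod_sub_mul {F : ℂ → ℂ} {K : Set ℂ} (hK : IsCompact K)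
    (hconn : IsPreconnected K) (hnt : K.Nontrivial) (hF : AnalyticOnNhd ℂ F K) {x : ℂ}
    (hx : x ∈ K) (hFx : F x ≠ 0) :
    ∃ (n : ℕ) (a : Fin n → ℂ) (g : ℂ → ℂ), (∀ i, a i ∈ K) ∧ AnalyticOnNhd ℂ g K ∧
      (∀ w ∈ K, g w ≠ 0) ∧ ∀ᶠ w in 𝓝ˢ K, F w = (∏ i, (w - a i)) * g w := by
  have horder : ∀ u : K, meromorphicOrderAt F u ≠ ⊤ := fun u ↦
    hF.meromorphicOn.meromorphicOrderAt_ne_top_of_isPreconnected hconn hx u.2 <| by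
      simp [(hF x hx).meromorphicOrderAt_eq, (hF x hx).analyticOrderAt_eq_zero.2 hFx]
  have hfin := (MeromorphicOn.divisor F K).finiteSupport hK
  obtain ⟨g, hg, hg0, hFg⟩ := hF.meromorphicOn.extract_zeros_poles horder hfin
  obtain ⟨n, a, ha, hprod⟩ :=
    exists_finprod_zpow_eq_prod_sub (MeromorphicOn.AnalyticOnNhd.divisor_nonneg hF) hfin
  refine ⟨n, a, g, fun i ↦ (MeromorphicOn.divisor F K).supportWithinDomain (ha i), hg,
    fun w hw ↦ hg0 ⟨w, hw⟩, eventually_nhdsSet_iff_forall.2 fun w hw ↦ ?_⟩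
  have hRHS : AnalyticAt ℂ (fun w ↦ (∏ i, (w - a i)) * g w) w :=
    (Finset.univ.analyticAt_fun_prod fun i _ ↦ by fun_prop).fun_mul (hg w hw)
  refine ((hF w hw).continuousAt.eventuallyEq_nhds_iff_eventuallyEq_nhdsNE
    hRHS.continuousAt).1 ?_
  rw [hprod] at hFg
  exact (hF w hw).meromorphicAt.eventuallyEq_nhdsNE_of_eventuallyEq_codiscreteWithin
    hRHS.meromorphicAt hw (hconn.preperfect_of_nontrivial hnt w hw) hFg

/-- `F = ∏ᵢ (w - aᵢ) · g` near the closed disc of centre `c` and radius `r`, where the `aᵢ` lie in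
the open disc and `g` is a holomorphic unit: the `aᵢ` are the roots of `F` in the disc, listed with
multiplicity. -/
structure IsRootFactorization (F : ℂ → ℂ) (c : ℂ) (r : ℝ) {ι : Type*} [Fintype ι] (a : ι → ℂ)
    (g : ℂ → ℂ) : Prop where
  root_mem : ∀ i, a i ∈ ball c r
  analyticOnNhd : AnalyticOnNhd ℂ g (closedBall c r)
  ne_zero : ∀ w ∈ closedBall c r, g w ≠ 0
  eventually_eq : ∀ᶠ w in 𝓝ˢ (closedBall c r), F w = (∏ i, (w - a i)) * g w

theorem exists_isRootFactorization {F : ℂ → ℂ} {c : ℂ} {r : ℝ} (hr : 0 < r)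
    (hF : AnalyticOnNhd ℂ F (closedBall c r)) (hne : ∀ w ∈ sphere c r, F w ≠ 0) :
    ∃ (n : ℕ) (a : Fin n → ℂ) (g : ℂ → ℂ), IsRootFactorization F c r a g := by
  obtain ⟨x, hx⟩ := NormedSpace.sphere_nonempty (x := c).2 hr.le
  have hx' := sphere_subset_closedBall hx
  have hnt : (closedBall c r).Nontrivial := ⟨c, mem_closedBall_self hr.le, x, hx', by
    rintro rfl
    simp [hr.ne] at hx⟩
  obtain ⟨n, a, g, ha, hg, hg0, hFg⟩ := exists_eventually_eq_prod_sub_mul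
    (isCompact_closedBall c r) (convex_closedBall c r).isPreconnected hnt hF hx' (hne x hx)
  refine ⟨n, a, g, fun i ↦ ?_, hg, hg0, hFg⟩
  have hroot : F (a i) = 0 := by
    rw [hFg.self_of_nhdsSet (a i) (ha i),
      Finset.prod_eq_zero (Finset.mem_univ i) (sub_self (a i)), zero_mul]
  exact lt_of_le_of_ne (ha i) fun h ↦ hne _ h hroot

namespace IsRootFactorization

variable {F g : ℂ → ℂ} {c : ℂ} {r : ℝ} {ι : Type*} [Fintype ι] {a : ι → ℂ}

lemma eq (h : IsRootFactorization F c r a g) {w : ℂ} (hw : w ∈ closedBall c r) :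
    F w = (∏ i, (w - a i)) * g w :=
  h.eventually_eq.self_of_nhdsSet w hw

lemma sub_ne_zero (h : IsRootFactorization F c r a g) {w : ℂ} (hw : w ∈ sphere c r) (i : ι) :
    w - a i ≠ 0 :=
  _root_.sub_ne_zero.2 fun hwa ↦ (mem_ball.1 (h.root_mem i)).ne (hwa ▸ mem_sphere.1 hw)

lemma apply_ne_zero (h : IsRootFactorization F c r a g) {w : ℂ} (hw : w ∈ sphere c r) :
    F w ≠ 0 := by
  rw [h.eq (sphere_subset_closedBall hw)]
  exact mul_ne_zero (Finset.prod_ne_zero_iff.2 fun i _ ↦ h.sub_ne_zero hw i)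
    (h.ne_zero w (sphere_subset_closedBall hw))

lemma logDeriv_eq (h : IsRootFactorization F c r a g) {w : ℂ} (hw : w ∈ sphere c r) :
    logDeriv F w = ∑ i, (w - a i)⁻¹ + logDeriv g w := by
  have hw' := sphere_subset_closedBall hw
  have hF : F =ᶠ[𝓝 w] fun w ↦ (∏ i, (w - a i)) * g w :=
    h.eventually_eq.filter_mono (nhds_le_nhdsSet hw')
  rw [logDeriv_apply, hF.deriv_eq, hF.eq_of_nhds, ← logDeriv_apply,
    logDeriv_mul w (Finset.prod_ne_zero_iff.2 fun i _ ↦ h.sub_ne_zero hw i) (h.ne_zero w hw')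
      (by fun_prop) (h.analyticOnNhd w hw').differentiableAt,
    logDeriv_prod (fun i _ ↦ h.sub_ne_zero hw i) fun i _ ↦ by fun_prop]
  simp [logDeriv_apply]

/-- Generalized argument principle. -/
theorem circleIntegral_mul_logDeriv (h : IsRootFactorization F c r a g) (hr : 0 ≤ r) {φ : ℂ → ℂ}
    (hφ : DifferentiableOn ℂ φ (closedBall c r)) :
    (∮ w in C(c, r), φ w * logDeriv F w) = 2 * Real.pi * Complex.I * ∑ i, φ (a i) := by
  have hpole : ∀ i, CircleIntegrable (fun w ↦ (w - a i)⁻¹ • φ w) c r := fun i ↦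
    (ContinuousOn.smul (ContinuousOn.inv₀ (f := fun w ↦ w - a i) (by fun_prop)
      fun w hw ↦ h.sub_ne_zero hw i)
      (hφ.continuousOn.mono sphere_subset_closedBall)).circleIntegrable hr
  have hunit : DifferentiableOn ℂ (fun w ↦ φ w * logDeriv g w) (closedBall c r) :=
    hφ.mul fun w hw ↦ ((h.analyticOnNhd w hw).deriv.div (h.analyticOnNhd w hw)
      (h.ne_zero w hw)).differentiableAt.differentiableWithinAt
  have hsplit : ∀ w ∈ sphere c r,
      φ w * logDeriv F w = (∑ i, (w - a i)⁻¹ • φ w) + φ w * logDeriv g w := fun w hw ↦ by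
    simp only [h.logDeriv_eq hw, mul_comm (φ w), add_mul, Finset.sum_mul, smul_eq_mul]
  rw [circleIntegral.integral_congr hr hsplit,
    circleIntegral.integral_add (CircleIntegrable.fun_sum _ fun i _ ↦ hpole i)
      ((hunit.continuousOn.mono sphere_subset_closedBall).circleIntegrable hr),
    circleIntegral.integral_fun_sum fun i _ ↦ hpole i,
    (hunit.diffContOnCl_ball subset_rfl).circleIntegral_eq_zero hr, add_zero, Finset.mul_sum]
  exact Finset.sum_congr rfl fun i _ ↦ hφ.circleIntegral_sub_inv_smul (h.root_mem i)

theorem le_norm_unit (h : IsRootFactorization F c r a g) (hr : 0 < r) {μ : ℝ} (hμ : 0 < μ)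
    (hF : ∀ w ∈ sphere c r, μ ≤ ‖F w‖) {w : ℂ} (hw : w ∈ closedBall c r) :
    μ / (2 * r) ^ Fintype.card ι ≤ ‖g w‖ := by
  have hsphere : ∀ w ∈ sphere c r, μ / (2 * r) ^ Fintype.card ι ≤ ‖g w‖ := fun w hw ↦ by
    rw [div_le_iff₀' (by positivity)]
    calc μ ≤ ‖F w‖ := hF w hw
      _ = (∏ i, ‖w - a i‖) * ‖g w‖ := by
        rw [h.eq (sphere_subset_closedBall hw), norm_mul, norm_prod]
      _ ≤ (∏ _i : ι, 2 * r) * ‖g w‖ := by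
        gcongr with i
        rw [← dist_eq_norm, two_mul]
        exact (dist_triangle_right w (a i) c).trans
          (add_le_add (mem_sphere.1 hw).le (mem_ball.1 (h.root_mem i)).le)
      _ = (2 * r) ^ Fintype.card ι * ‖g w‖ := by simp
  have hinv : DifferentiableOn ℂ g⁻¹ (closedBall c r) := fun w hw ↦
    ((h.analyticOnNhd w hw).inv (h.ne_zero w hw)).differentiableAt.differentiableWithinAt
  have hmax : ‖g⁻¹ w‖ ≤ (μ / (2 * r) ^ Fintype.card ι)⁻¹ := by
    refine Complex.norm_le_of_forall_mem_frontier_norm_le isBounded_ball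
      (hinv.diffContOnCl_ball subset_rfl) (fun z hz ↦ ?_) (by rwa [closure_ball _ hr.ne'])
    rw [frontier_ball _ hr.ne'] at hz
    rw [Pi.inv_apply, norm_inv]
    exact inv_anti₀ (by positivity) (hsphere z hz)
  rw [Pi.inv_apply, norm_inv] at hmax
  exact (inv_le_inv₀ (norm_pos_iff.2 (h.ne_zero w hw)) (by positivity)).1 hmax

end IsRootFactorization

end RootFactorization

section FamiliesOfRoots

lemma deriv_mk_left_eq_fderiv {f : ℂ × ℂ → ℂ} {p : ℂ × ℂ} (hf : DifferentiableAt ℂ f p) :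
    deriv (fun w ↦ f (p.1, w)) p.2 = fderiv ℂ f p (0, 1) :=
  (hf.hasFDerivAt.comp_hasDerivAt p.2
    ((hasDerivAt_const p.2 p.1).prodMk (hasDerivAt_id p.2))).deriv

lemma analyticAt_logDeriv_mk_left {f : ℂ × ℂ → ℂ} {p : ℂ × ℂ} (hf : AnalyticAt ℂ f p)
    (hp : f p ≠ 0) : AnalyticAt ℂ (fun q ↦ logDeriv (fun w ↦ f (q.1, w)) q.2) p := by
  have hfderiv : AnalyticAt ℂ (fun q ↦ fderiv ℂ f q (0, 1)) p :=
    ((ContinuousLinearMap.apply ℂ ℂ ((0 : ℂ), (1 : ℂ))).analyticAt _).fun_comp hf.fderiv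
  refine (hfderiv.div hf hp).congr ?_
  filter_upwards [hf.eventually_analyticAt] with q hq
  rw [logDeriv_apply, deriv_mk_left_eq_fderiv hq.differentiableAt, Pi.div_apply]

lemma exists_pos_eventually_forall_le_norm_of_isCompact {X Y E : Type*} [TopologicalSpace X]
    [TopologicalSpace Y] [NormedAddCommGroup E] {K : Set Y} (hK : IsCompact K) {f : X × Y → E}
    {x₀ : X} (hf : ∀ y ∈ K, ContinuousAt f (x₀, y)) (hne : ∀ y ∈ K, f (x₀, y) ≠ 0) :
    ∃ μ > 0, ∀ᶠ x in 𝓝 x₀, ∀ y ∈ K, μ ≤ ‖f (x, y)‖ := by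
  obtain ⟨ν, hν, hle⟩ := hK.exists_forall_le' (f := fun y ↦ ‖f (x₀, y)‖) (a := 0)
    (fun y hy ↦ (ContinuousAt.comp' (hf y hy) (by fun_prop)).norm.continuousWithinAt)
    fun y hy ↦ norm_pos_iff.2 (hne y hy)
  refine ⟨ν / 2, half_pos hν, hK.eventually_forall_of_forall_eventually fun y hy ↦ ?_⟩
  exact (hf y hy).norm.eventually_const_le ((half_lt_self hν).trans_le (hle y hy))

variable {f : ℂ × ℂ → ℂ} {z₀ c : ℂ} {r : ℝ}

lemma analyticAt_circleIntegral_mul_logDeriv (hr : 0 ≤ r)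
    (hf : ∀ w ∈ sphere c r, AnalyticAt ℂ f (z₀, w)) (hne : ∀ w ∈ sphere c r, f (z₀, w) ≠ 0)
    {φ : ℂ × ℂ → ℂ} (hφ : ∀ w ∈ sphere c r, AnalyticAt ℂ φ (z₀, w)) :
    AnalyticAt ℂ (fun z ↦ ∮ w in C(c, r), φ (z, w) * logDeriv (fun w ↦ f (z, w)) w) z₀ :=
  analyticAt_circleIntegral_param hr
    (F := fun p ↦ φ p * logDeriv (fun w ↦ f (p.1, w)) p.2) fun w hw ↦
    (hφ w hw).fun_mul (analyticAt_logDeriv_mk_left (hf w hw) (hne w hw))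

theorem analyticAt_sum_roots {ι : Type*} [Fintype ι] {a : ℂ → ι → ℂ} {g : ℂ → ℂ → ℂ} (hr : 0 ≤ r)
    (hf : ∀ w ∈ sphere c r, AnalyticAt ℂ f (z₀, w))
    (h : ∀ᶠ z in 𝓝 z₀, IsRootFactorization (fun w ↦ f (z, w)) c r (a z) (g z))
    {φ : ℂ × ℂ → ℂ} (hφ : ∀ w ∈ closedBall c r, AnalyticAt ℂ φ (z₀, w)) :
    AnalyticAt ℂ (fun z ↦ ∑ i, φ (z, a z i)) z₀ := by
  have hintegral := analyticAt_circleIntegral_mul_logDeriv hr hf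
    (fun w hw ↦ h.self_of_nhds.apply_ne_zero hw) fun w hw ↦ hφ w (sphere_subset_closedBall hw)
  have hφ_near : ∀ᶠ z in 𝓝 z₀, ∀ w ∈ closedBall c r, AnalyticAt ℂ φ (z, w) :=
    (isCompact_closedBall c r).eventually_forall_of_forall_eventually fun w hw ↦
      (hφ w hw).eventually_analyticAt
  refine ((analyticAt_const (v := (2 * Real.pi * Complex.I : ℂ)⁻¹)).mul hintegral).congr ?_
  filter_upwards [h, hφ_near] with z hz hφz
  have hslice : DifferentiableOn ℂ (fun w ↦ φ (z, w)) (closedBall c r) := fun w hw ↦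
    ((hφz w hw).differentiableAt.fun_comp' w (by fun_prop)).differentiableWithinAt
  rw [Pi.mul_apply, hz.circleIntegral_mul_logDeriv hr hslice,
    inv_mul_cancel_left₀ Complex.two_pi_I_ne_zero]

lemma eq_of_norm_natCast_sub_lt_one {m n : ℕ} (h : ‖(m : ℂ) - n‖ < 1) : m = n := by
  have hint : |(m : ℤ) - n| < 1 := by
    rw [← Int.cast_lt (R := ℝ), Int.cast_one, Int.cast_abs, ← Complex.norm_intCast]
    simpa using h
  linarith [Int.abs_lt_one_iff.1 hint]

/-- Hurwitz's theorem: the number of roots, `(2πi)⁻¹ ∮ f'/f`, is continuous in the parameter. -/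
theorem IsRootFactorization.eventually_exists {k : ℕ} {a : Fin k → ℂ} {g : ℂ → ℂ} (hr : 0 < r)
    (hf : ∀ w ∈ closedBall c r, AnalyticAt ℂ f (z₀, w))
    (h : IsRootFactorization (fun w ↦ f (z₀, w)) c r a g) :
    ∀ᶠ z in 𝓝 z₀, ∃ (a : Fin k → ℂ) (g : ℂ → ℂ),
      IsRootFactorization (fun w ↦ f (z, w)) c r a g := by
  have hf_sphere : ∀ w ∈ sphere c r, AnalyticAt ℂ f (z₀, w) := fun w hw ↦
    hf w (sphere_subset_closedBall hw)
  let N : ℂ → ℂ := fun z ↦ ∮ w in C(c, r), 1 * logDeriv (fun w ↦ f (z, w)) w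
  have hN : ContinuousAt N z₀ := (analyticAt_circleIntegral_mul_logDeriv (φ := fun _ ↦ 1) hr.le
    hf_sphere (fun w hw ↦ h.apply_ne_zero hw) fun _ _ ↦ analyticAt_const).continuousAt
  have hcount : ∀ {z : ℂ} {n : ℕ} {a : Fin n → ℂ} {g : ℂ → ℂ},
      IsRootFactorization (fun w ↦ f (z, w)) c r a g → N z = 2 * Real.pi * Complex.I * n :=
    fun hz ↦ by
      simpa [N] using hz.circleIntegral_mul_logDeriv hr.le (differentiableOn_const (1 : ℂ))
  have hne : ∀ᶠ z in 𝓝 z₀, ∀ w ∈ sphere c r, f (z, w) ≠ 0 :=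
    (isCompact_sphere c r).eventually_forall_of_forall_eventually fun w hw ↦
      (hf_sphere w hw).continuousAt.eventually_ne (h.apply_ne_zero hw)
  have hf_near : ∀ᶠ z in 𝓝 z₀, ∀ w ∈ closedBall c r, AnalyticAt ℂ f (z, w) :=
    (isCompact_closedBall c r).eventually_forall_of_forall_eventually fun w hw ↦
      (hf w hw).eventually_analyticAt
  filter_upwards [hne, hf_near, hN.eventually (ball_mem_nhds _ Real.two_pi_pos)]
    with z hz hfz hNz
  obtain ⟨n, b, G, hb⟩ := exists_isRootFactorization (F := fun w ↦ f (z, w)) hr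
    (fun w hw ↦ (hfz w hw).fun_comp (analyticAt_const.prod analyticAt_id)) hz
  obtain rfl : n = k := by
    apply eq_of_norm_natCast_sub_lt_one
    rw [dist_eq_norm, hcount hb, hcount h, ← mul_sub, norm_mul] at hNz
    exact lt_of_mul_lt_mul_left (by simpa [abs_of_pos Real.pi_pos] using hNz) Real.two_pi_pos.le
  exact ⟨b, G, hb⟩

theorem exists_isRootFactorization_family (hf : AnalyticAt ℂ f (z₀, c)) {k : ℕ}
    (horder : analyticOrderAt (fun w ↦ f (z₀, w)) c = k) :
    ∃ r > 0, (∀ w ∈ closedBall c r, AnalyticAt ℂ f (z₀, w)) ∧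
      ∃ (a : ℂ → Fin k → ℂ) (g : ℂ → ℂ → ℂ),
        ∀ᶠ z in 𝓝 z₀, IsRootFactorization (fun w ↦ f (z, w)) c r (a z) (g z) := by
  obtain ⟨g₀, hg₀, hg₀c, hfg⟩ := (AnalyticAt.analyticOrderAt_eq_natCast
    (hf.fun_comp (f := fun w ↦ (z₀, w)) (analyticAt_const.prod analyticAt_id))).1 horder
  have hnear : ∀ᶠ w in 𝓝 c, AnalyticAt ℂ f (z₀, w) ∧ AnalyticAt ℂ g₀ w ∧ g₀ w ≠ 0 ∧
      ∀ᶠ w in 𝓝 w, f (z₀, w) = (w - c) ^ k • g₀ w :=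
    ((Continuous.tendsto (f := fun w ↦ (z₀, w)) (by fun_prop) c).eventually
      hf.eventually_analyticAt).and <| hg₀.eventually_analyticAt.and <|
        (hg₀.continuousAt.eventually_ne hg₀c).and hfg.eventually_nhds
  obtain ⟨r, hr, hball⟩ := nhds_basis_closedBall.eventually_iff.1 hnear
  have hfactor : IsRootFactorization (fun w ↦ f (z₀, w)) c r (fun _ : Fin k ↦ c) g₀ :=
    ⟨fun _ ↦ mem_ball_self hr, fun w hw ↦ (hball hw).2.1, fun w hw ↦ (hball hw).2.2.1,
      eventually_nhdsSet_iff_forall.2 fun w hw ↦ by simpa using (hball hw).2.2.2⟩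
  have hf_disc : ∀ w ∈ closedBall c r, AnalyticAt ℂ f (z₀, w) := fun w hw ↦ (hball hw).1
  have hex := hfactor.eventually_exists hr hf_disc
  choose! a g hag using fun z (hz : ∃ (a : Fin k → ℂ) (g : ℂ → ℂ),
    IsRootFactorization (fun w ↦ f (z, w)) c r a g) ↦ hz
  exact ⟨r, hr, hf_disc, a, g, hex.mono hag⟩

end FamiliesOfRoots

section PowerSums

lemma aeval_esymm_eq_zero_of_forall_sum_pow_eq_zero {ι K : Type*} [Fintype ι] [Field K] [CharZero K]
    {b : ι → K} {n : ℕ} (h : ∀ j ∈ Finset.Icc 1 n, ∑ i, b i ^ j = 0) {j : ℕ}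
    (hj : j ∈ Finset.Icc 1 n) : MvPolynomial.aeval b (MvPolynomial.esymm ι K j) = 0 := by
  have newton := congrArg (MvPolynomial.aeval b) (MvPolynomial.mul_esymm_eq_sum ι K j)
  simp only [map_mul, map_natCast, map_sum] at newton
  rw [Finset.sum_eq_zero, mul_zero] at newton
  · exact (mul_eq_zero.1 newton).resolve_left <| Nat.cast_ne_zero.2 <|
      Nat.one_le_iff_ne_zero.1 (Finset.mem_Icc.1 hj).1
  · intro p hp
    obtain ⟨hsum, hlt⟩ := Finset.mem_filter.1 hp
    rw [Finset.HasAntidiagonal.mem_antidiagonal] at hsum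
    rw [Finset.mem_Icc] at hj
    simp [MvPolynomial.psum, h p.2 (Finset.mem_Icc.2 (by omega))]

theorem eq_zero_of_forall_sum_pow_eq_zero {ι K : Type*} [Fintype ι] [Field K] [CharZero K]
    {b : ι → K} (h : ∀ j ∈ Finset.Icc 1 (Fintype.card ι), ∑ i, b i ^ j = 0) (i : ι) : b i = 0 := by
  have vieta := congrArg (Polynomial.eval (b i))
    (Multiset.prod_X_sub_X_eq_sum_esymm (Finset.univ.val.map b))
  rw [Multiset.map_map, ← Finset.prod, Polynomial.eval_prod,
    Finset.prod_eq_zero (Finset.mem_univ i) (by simp), Polynomial.eval_finsetSum,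
    Finset.sum_eq_single_of_mem 0 (by simp)] at vieta
  · exact eq_zero_of_pow_eq_zero (n := Fintype.card ι) (by simpa [Multiset.esymm] using vieta.symm)
  · intro j hj hj0
    rw [← MvPolynomial.aeval_esymm_eq_multiset_esymm ι K,
      aeval_esymm_eq_zero_of_forall_sum_pow_eq_zero h (by simp at hj ⊢; omega)]
    simp

/-- The barycentre of a finite family of points, counted with multiplicity. -/
noncomputable def barycentre {ι : Type*} [Fintype ι] (a : ι → ℂ) : ℂ :=
  (Fintype.card ι : ℂ)⁻¹ * ∑ i, a i

/-- The (unnormalized) power sum of the deviations of a finite family from its barycentre. The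
family is constant exactly when these vanish for all exponents `1 ≤ j ≤ card ι`. -/
noncomputable def centralPowerSum {ι : Type*} [Fintype ι] (a : ι → ℂ) (j : ℕ) : ℂ :=
  ∑ i, (a i - barycentre a) ^ j

lemma eq_barycentre_of_forall_centralPowerSum_eq_zero {ι : Type*} [Fintype ι] {a : ι → ℂ}
    (h : ∀ j ∈ Finset.Icc 1 (Fintype.card ι), centralPowerSum a j = 0) (i : ι) :
    a i = barycentre a :=
  sub_eq_zero.1 (eq_zero_of_forall_sum_pow_eq_zero (b := fun i ↦ a i - barycentre a) h i)

lemma barycentre_mem_convexHull {ι : Type*} [Fintype ι] [Nonempty ι] (a : ι → ℂ) :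
    barycentre a ∈ convexHull ℝ (range a) := by
  have hmem := (convex_convexHull ℝ (range a)).sum_mem (t := Finset.univ)
    (w := fun _ : ι ↦ (Fintype.card ι : ℝ)⁻¹) (fun _ _ ↦ by positivity) (by simp)
    fun i _ ↦ subset_convexHull ℝ _ (mem_range_self i)
  simpa [barycentre, ← Finset.mul_sum] using hmem

theorem exists_le_norm_sub_of_lt_norm_centralPowerSum {ι : Type*} [Fintype ι] {a : ι → ℂ} {j : ℕ}
    {X : ℝ} (hX : Fintype.card ι * (2 * X) ^ j < ‖centralPowerSum a j‖) (w : ℂ) :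
    ∃ i, X ≤ ‖w - a i‖ := by
  rcases isEmpty_or_nonempty ι with _ | _
  · simp [centralPowerSum] at hX
  by_contra! hclose
  have hmean : barycentre a ∈ ball w X := convexHull_min
    (range_subset_iff.2 fun i ↦ by rw [mem_ball', dist_eq_norm]; exact hclose i)
    (convex_ball w X) (barycentre_mem_convexHull a)
  refine hX.not_ge ((norm_sum_le_of_le (f := fun i ↦ (a i - barycentre a) ^ j) Finset.univ
    (n := fun _ ↦ (2 * X) ^ j) fun i _ ↦ ?_).trans_eq (by simp))
  rw [norm_pow, ← dist_eq_norm, two_mul]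
  gcongr
  exact (dist_triangle_left _ _ w).trans
    (add_le_add ((dist_eq_norm w (a i)).trans_le (hclose i).le) (mem_ball'.1 hmean).le)

end PowerSums

section Estimates

lemma exists_mul_norm_sub_pow_le_norm {𝕜 E : Type*} [NontriviallyNormedField 𝕜]
    [NormedAddCommGroup E] [NormedSpace 𝕜 E] {q : 𝕜 → E} {z₀ : 𝕜} (hq : AnalyticAt 𝕜 q z₀)
    (hne : ¬ ∀ᶠ z in 𝓝 z₀, q z = 0) :
    ∃ κ > 0, ∃ N : ℕ, ∀ᶠ z in 𝓝 z₀, κ * ‖z - z₀‖ ^ N ≤ ‖q z‖ := by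
  obtain ⟨N, g, hg, hg0, hqg⟩ := hq.exists_eventuallyEq_pow_smul_nonzero_iff.2 hne
  refine ⟨‖g z₀‖ / 2, by positivity, N, ?_⟩
  filter_upwards [hqg, hg.continuousAt.norm.eventually_const_le (half_lt_self (norm_pos_iff.2 hg0))]
    with z hz hgz
  rw [hz, norm_smul, norm_pow, mul_comm]
  gcongr

lemma exists_two_div_lt_and_mul_sub_lt_two {k : ℕ} (hk : 1 ≤ k) (N : ℕ) :
    ∃ s p : ℝ, 0 < s ∧ s ≤ p ∧ N * s < 2 ∧ 2 / k < p ∧ p * k - s < 2 := by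
  have hk' : (1 : ℝ) ≤ k := by exact_mod_cast hk
  have hs : 0 < 1 / (N + k : ℝ) := by positivity
  refine ⟨1 / (N + k), (2 + 1 / (N + k) / 2) / k, hs, ?_, ?_, ?_, ?_⟩
  · rw [le_div_iff₀ (by positivity), div_mul_eq_mul_div, one_mul]
    have : (k : ℝ) / (N + k) ≤ 1 := (div_le_one (by positivity)).2 (by simp)
    linarith
  · rw [mul_one_div, div_lt_iff₀ (by positivity)]
    linarith
  · gcongr
    linarith
  · rw [div_mul_cancel₀ _ (by positivity)]
    linarith

theorem prod_rpow_neg_le_mul_sum {ι : Type*} [Fintype ι] {x : ι → ℝ} (hx : ∀ i, 0 ≤ x i) {t : ι}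
    {X s p : ℝ} (hX : 0 < X) (hXt : X ≤ x t) (hs : 0 < s) (hsp : s ≤ p) :
    (∏ i, x i) ^ (-p) ≤ X ^ (-s) * ∑ i, x i ^ (-(p * Fintype.card ι - s)) := by
  classical
  by_cases! h0 : ∃ i, x i = 0
  · obtain ⟨i, hi⟩ := h0
    rw [Finset.prod_eq_zero (Finset.mem_univ i) hi, Real.zero_rpow (by linarith)]
    exact mul_nonneg (by positivity) (Finset.sum_nonneg fun i _ ↦ Real.rpow_nonneg (hx i) _)
  have hpos : ∀ i, 0 < x i := fun i ↦ (hx i).lt_of_ne' (h0 i)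
  obtain ⟨l, -, hl⟩ := Finset.exists_min_image Finset.univ x ⟨t, Finset.mem_univ t⟩
  have hmono : ∀ i, ∀ q : ℝ, q ≤ 0 → x i ^ q ≤ x l ^ q := fun i q hq ↦
    Real.rpow_le_rpow_of_nonpos (hpos l) (hl i (Finset.mem_univ i)) hq
  have hcard : ((Finset.univ.erase t).card : ℝ) = Fintype.card ι - 1 := by
    rw [Finset.cast_card_erase_of_mem (Finset.mem_univ t), Finset.card_univ]
  calc (∏ i, x i) ^ (-p)
      = x t ^ (-s) * x t ^ (s - p) * ∏ i ∈ Finset.univ.erase t, x i ^ (-p) := by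
        rw [← Real.rpow_add (hpos t), show -s + (s - p) = -p by ring,
          Finset.mul_prod_erase _ (fun i ↦ x i ^ (-p)) (Finset.mem_univ t),
          Real.finsetProd_rpow _ _ fun i _ ↦ hx i]
    _ ≤ X ^ (-s) * x l ^ (s - p) * ∏ _i ∈ Finset.univ.erase t, x l ^ (-p) := by
        have := fun i q ↦ Real.rpow_nonneg (hx i) q
        refine mul_le_mul (mul_le_mul (Real.rpow_le_rpow_of_nonpos hX hXt (by linarith))
          (hmono t _ (by linarith)) (this _ _) (by positivity))
          (Finset.prod_le_prod (fun i _ ↦ this i _) fun i _ ↦ hmono i _ (by linarith))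
          (Finset.prod_nonneg fun i _ ↦ this i _) (mul_nonneg (by positivity) (this _ _))
    _ = X ^ (-s) * x l ^ (-(p * Fintype.card ι - s)) := by
        rw [Finset.prod_const, ← Real.rpow_natCast, ← Real.rpow_mul (hx l), mul_assoc,
          ← Real.rpow_add (hpos l), hcard]
        ring_nf
    _ ≤ X ^ (-s) * ∑ i, x i ^ (-(p * Fintype.card ι - s)) := by
        gcongr
        exact Finset.single_le_sum (f := fun i ↦ x i ^ (-(p * Fintype.card ι - s)))
          (fun i _ ↦ Real.rpow_nonneg (hx i) _) (Finset.mem_univ l)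

end Estimates

section SingularIntegrals

variable {E : Type*} [NormedAddCommGroup E] [MeasurableSpace E] [BorelSpace E]
  {μ : Measure E}

lemma setLIntegral_ball_norm_sub_rpow_le [μ.IsAddRightInvariant] {a c : E} {r : ℝ}
    (ha : a ∈ ball c r) (e : ℝ) :
    ∫⁻ x in ball c r, ENNReal.ofReal (‖x - a‖ ^ e) ∂μ ≤
      ∫⁻ x in ball 0 (2 * r), ENNReal.ofReal (‖x‖ ^ e) ∂μ := by
  rw [← lintegral_indicator measurableSet_ball, ← lintegral_indicator measurableSet_ball,
    ← lintegral_sub_right_eq_self ((ball 0 (2 * r)).indicator _) a]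
  refine lintegral_mono (indicator_le fun x hx ↦ ?_)
  have hxa : x - a ∈ ball 0 (2 * r) := by
    rw [mem_ball_zero_iff, ← dist_eq_norm, two_mul]
    exact (dist_triangle_right x a c).trans_lt (add_lt_add hx ha)
  rw [indicator_of_mem hxa]

lemma setLIntegral_ball_sum_norm_sub_rpow_le [μ.IsAddRightInvariant] {ι : Type*} [Fintype ι]
    {a : ι → E} {c : E} {r : ℝ} (ha : ∀ i, a i ∈ ball c r) (e : ℝ) :
    ∫⁻ w in ball c r, ENNReal.ofReal (∑ i, ‖w - a i‖ ^ e) ∂μ ≤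
      Fintype.card ι * ∫⁻ w in ball 0 (2 * r), ENNReal.ofReal (‖w‖ ^ e) ∂μ := by
  simp_rw [ENNReal.ofReal_sum_of_nonneg fun _ _ ↦ Real.rpow_nonneg (norm_nonneg _) e]
  rw [lintegral_finsetSum _ fun _ _ ↦ by fun_prop]
  refine (Finset.sum_le_card_nsmul _ _ _ fun i _ ↦
    setLIntegral_ball_norm_sub_rpow_le (ha i) e).trans_eq (by simp)

variable [NormedSpace ℝ E] [FiniteDimensional ℝ E] [Nontrivial E] [μ.IsAddHaarMeasure]

lemma setLIntegral_ball_norm_rpow_neg_lt_top {α : ℝ} (hα : α < Module.finrank ℝ E) (r : ℝ) :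
    ∫⁻ x in ball 0 r, ENNReal.ofReal (‖x‖ ^ (-α)) ∂μ < ⊤ := by
  refine IntegrableOn.setLIntegral_lt_top (integrableOn_ball_of_norm_le_rpow (C := 1)
    Module.finrank_pos hα (.of_forall fun x ↦ ?_) ?_)
  · rw [Real.norm_of_nonneg (by positivity), one_mul]
  · exact Measurable.aestronglyMeasurable (by fun_prop)

variable {F : Type*} [NormedAddCommGroup F] [MeasurableSpace F] [BorelSpace F] [NormedSpace ℝ F]
  [FiniteDimensional ℝ F] [Nontrivial F] {ν : Measure F} [ν.IsAddHaarMeasure]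

theorem integrableOn_prod_ball_of_norm_le {G ι : Type*} [NormedAddCommGroup G] [Fintype ι]
    {u : E × F → G} {z₀ : E} {c : F} {ρ r A α e : ℝ} (hα : α < Module.finrank ℝ E)
    (he : e < Module.finrank ℝ F)
    (hu : AEStronglyMeasurable u ((μ.prod ν).restrict (ball z₀ ρ ×ˢ ball c r))) {a : E → ι → F}
    (ha : ∀ z ∈ ball z₀ ρ, ∀ i, a z i ∈ ball c r)
    (hle : ∀ z ∈ ball z₀ ρ, z ≠ z₀ → ∀ w ∈ ball c r,
      ‖u (z, w)‖ ≤ A * ‖z - z₀‖ ^ (-α) * ∑ i, ‖w - a z i‖ ^ (-e)) :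
    IntegrableOn u (ball z₀ ρ ×ˢ ball c r) (μ.prod ν) := by
  rcases le_or_gt ρ 0 with hρ | hρ
  · simp [ball_eq_empty.2 hρ]
  set J := ∫⁻ w in ball 0 (2 * r), ENNReal.ofReal (‖w‖ ^ (-e)) ∂ν
  have hJ : J < ⊤ := setLIntegral_ball_norm_rpow_neg_lt_top he _
  have hfiber : ∀ᵐ z ∂μ.restrict (ball z₀ ρ), ∫⁻ w in ball c r, ‖u (z, w)‖ₑ ∂ν ≤
      ENNReal.ofReal A * (Fintype.card ι * J) * ENNReal.ofReal (‖z - z₀‖ ^ (-α)) := by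
    filter_upwards [ae_restrict_mem measurableSet_ball, ae_restrict_of_ae (Measure.ae_ne μ z₀)]
      with z hz hz₀
    calc ∫⁻ w in ball c r, ‖u (z, w)‖ₑ ∂ν
        ≤ ∫⁻ w in ball c r, ENNReal.ofReal (A * ‖z - z₀‖ ^ (-α)) *
            ENNReal.ofReal (∑ i, ‖w - a z i‖ ^ (-e)) ∂ν := by
          refine setLIntegral_mono (by fun_prop) fun w hw ↦ ?_
          rw [← ENNReal.ofReal_mul' (by positivity), ← ofReal_norm]
          exact ENNReal.ofReal_le_ofReal (hle z hz hz₀ w hw)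
      _ ≤ ENNReal.ofReal (A * ‖z - z₀‖ ^ (-α)) * (Fintype.card ι * J) := by
          rw [lintegral_const_mul _ (by fun_prop)]
          gcongr
          exact setLIntegral_ball_sum_norm_sub_rpow_le (ha z hz) _
      _ = _ := by
          rw [ENNReal.ofReal_mul' (by positivity)]
          ring
  refine ⟨hu, ?_⟩
  rw [← Measure.prod_restrict] at hu ⊢
  rw [HasFiniteIntegral, lintegral_prod _ hu.enorm]
  refine (lintegral_mono_ae hfiber).trans_lt ?_
  rw [lintegral_const_mul _ (by fun_prop)]
  have hbase : ∫⁻ z in ball z₀ ρ, ENNReal.ofReal (‖z - z₀‖ ^ (-α)) ∂μ < ⊤ :=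
    (setLIntegral_ball_norm_sub_rpow_le (mem_ball_self hρ) _).trans_lt
      (setLIntegral_ball_norm_rpow_neg_lt_top hα _)
  finiteness

end SingularIntegrals

section Barycentre

variable {f : ℂ × ℂ → ℂ} {z₀ c : ℂ} {r : ℝ} {ι : Type*} [Fintype ι] {a : ℂ → ι → ℂ}
  {g : ℂ → ℂ → ℂ}

lemma analyticAt_barycentre_roots (hr : 0 ≤ r) (hf : ∀ w ∈ sphere c r, AnalyticAt ℂ f (z₀, w))
    (h : ∀ᶠ z in 𝓝 z₀, IsRootFactorization (fun w ↦ f (z, w)) c r (a z) (g z)) :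
    AnalyticAt ℂ (fun z ↦ barycentre (a z)) z₀ :=
  analyticAt_const.mul (analyticAt_sum_roots (φ := Prod.snd) hr hf h fun _ _ ↦ analyticAt_snd)

lemma analyticAt_centralPowerSum_roots (hr : 0 ≤ r)
    (hf : ∀ w ∈ sphere c r, AnalyticAt ℂ f (z₀, w))
    (h : ∀ᶠ z in 𝓝 z₀, IsRootFactorization (fun w ↦ f (z, w)) c r (a z) (g z)) (j : ℕ) :
    AnalyticAt ℂ (fun z ↦ centralPowerSum (a z) j) z₀ :=
  analyticAt_sum_roots (φ := fun q ↦ (q.2 - barycentre (a q.1)) ^ j) hr hf h fun w _ ↦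
    (analyticAt_snd.sub (AnalyticAt.fun_comp (f := Prod.fst) (x := (z₀, w))
      (analyticAt_barycentre_roots hr hf h) analyticAt_fst)).pow j

end Barycentre

section UnitTimesPower

/-- The germ of `f` at `p` is a holomorphic unit times the `k`-th power of a holomorphic function
with a simple zero at `p`, i.e. of vanishing order one. -/
def IsUnitMulPowAt {E : Type*} [NormedAddCommGroup E] [NormedSpace ℂ E] (f : E → ℂ) (k : ℕ)
    (p : E) : Prop :=
  ∃ g h : E → ℂ, AnalyticAt ℂ g p ∧ AnalyticAt ℂ h p ∧ g p ≠ 0 ∧ h p = 0 ∧ fderiv ℂ h p ≠ 0 ∧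
    ∀ᶠ q in 𝓝 p, f q = g q * h q ^ k

lemma IsUnitMulPowAt.comp_continuousLinearEquiv {E F : Type*} [NormedAddCommGroup E]
    [NormedSpace ℂ E] [NormedAddCommGroup F] [NormedSpace ℂ F] {f : F → ℂ} {k : ℕ}
    (L : E ≃L[ℂ] F) {p : E} (hf : IsUnitMulPowAt f k (L p)) : IsUnitMulPowAt (f ∘ L) k p := by
  obtain ⟨g, h, hg, hh, hgp, hhp, hdh, hfgh⟩ := hf
  refine ⟨g ∘ L, h ∘ L, hg.comp (L.analyticAt p), hh.comp (L.analyticAt p), hgp, hhp, fun hd ↦ ?_,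
    L.continuous.continuousAt.eventually hfgh⟩
  rw [L.comp_right_fderiv] at hd
  exact hdh (ContinuousLinearMap.ext fun v ↦ by simpa using DFunLike.congr_fun hd (L.symm v))

lemma IsUnitMulPowAt.exists_isOpen {E : Type*} [NormedAddCommGroup E] [NormedSpace ℂ E]
    {f : E → ℂ} {k : ℕ} {p : E} (hf : IsUnitMulPowAt f k p) :
    ∃ (V : Set E) (g h : E → ℂ), IsOpen V ∧ p ∈ V ∧ DifferentiableOn ℂ g V ∧
      DifferentiableOn ℂ h V ∧ g p ≠ 0 ∧ h p = 0 ∧ iteratedFDeriv ℂ 1 h p ≠ 0 ∧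
      ∀ q ∈ V, f q = g q * h q ^ k := by
  obtain ⟨g, h, hg, hh, hgp, hhp, hdh, hfgh⟩ := hf
  obtain ⟨V, hV, hVo, hpV⟩ := _root_.eventually_nhds_iff.1
    (hfgh.and (hg.eventually_analyticAt.and hh.eventually_analyticAt))
  refine ⟨V, g, h, hVo, hpV, fun q hq ↦ (hV q hq).2.1.differentiableAt.differentiableWithinAt,
    fun q hq ↦ (hV q hq).2.2.differentiableAt.differentiableWithinAt, hgp, hhp, fun hd ↦ hdh ?_,
    fun q hq ↦ (hV q hq).1⟩
  ext v
  simpa using congrArg (· fun _ ↦ v) hd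

variable {f : ℂ × ℂ → ℂ} {z₀ c : ℂ} {r : ℝ} {k : ℕ} {m : ℂ → ℂ} {g : ℂ → ℂ → ℂ}

lemma IsRootFactorization.unit_eq_div {F g : ℂ → ℂ} {m : ℂ}
    (h : IsRootFactorization F c r (fun _ : Fin k ↦ m) g) {w : ℂ} (hw : w ∈ sphere c r)
    (hm : w - m ≠ 0) : g w = F w / (w - m) ^ k := by
  rw [eq_div_iff (pow_ne_zero k hm), h.eq (sphere_subset_closedBall hw)]
  simp [mul_comm]

lemma analyticAt_uncurry_unit (hr : 0 < r) (hf : ∀ w ∈ closedBall c r, AnalyticAt ℂ f (z₀, w))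
    (hm : AnalyticAt ℂ m z₀)
    (h : ∀ᶠ z in 𝓝 z₀, IsRootFactorization (fun w ↦ f (z, w)) c r (fun _ : Fin k ↦ m z) (g z))
    (hmem : ∀ᶠ z in 𝓝 z₀, m z ∈ ball c r) :
    AnalyticAt ℂ (fun q : ℂ × ℂ ↦ g q.1 q.2) (z₀, c) := by
  have hf_near : ∀ᶠ z in 𝓝 z₀, ∀ w ∈ closedBall c r, AnalyticAt ℂ f (z, w) :=
    (isCompact_closedBall c r).eventually_forall_of_forall_eventually fun w hw ↦
      (hf w hw).eventually_analyticAt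
  obtain ⟨W, hW, hWo, hz₀⟩ := _root_.eventually_nhds_iff.1
    (h.and (hmem.and (hf_near.and hm.eventually_analyticAt)))
  have hne : ∀ z ∈ W, ∀ w ∈ sphere c r, w - m z ≠ 0 := fun z hz w hw ↦
    sub_ne_zero.2 fun hwm ↦ (mem_ball.1 (hW z hz).2.1).ne (hwm ▸ mem_sphere.1 hw)
  have heq : ∀ z ∈ W, ∀ w ∈ sphere c r, g z w = f (z, w) / (w - m z) ^ k := fun z hz w hw ↦
    (hW z hz).1.unit_eq_div hw (hne z hz w hw)
  have hquot : ∀ z ∈ W, ∀ w ∈ sphere c r,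
      AnalyticAt ℂ (fun q : ℂ × ℂ ↦ f q / (q.2 - m q.1) ^ k) (z, w) := fun z hz w hw ↦
    ((hW z hz).2.2.1 w (sphere_subset_closedBall hw)).div ((analyticAt_snd.sub
      (AnalyticAt.fun_comp (f := Prod.fst) (x := (z, w)) (hW z hz).2.2.2 analyticAt_fst)).pow k)
      (pow_ne_zero k (hne z hz w hw))
  refine analyticOnNhd_prod_ball_of_sphere (F := fun q ↦ g q.1 q.2) hWo ?_ (fun w hw ↦ ?_)
    (fun z hz ↦ ?_) (z₀, c) ⟨hz₀, mem_ball_self hr⟩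
  · exact ContinuousOn.congr (fun q hq ↦ (hquot q.1 hq.1 q.2 hq.2).continuousAt.continuousWithinAt)
      fun q hq ↦ heq q.1 hq.1 q.2 hq.2
  · exact DifferentiableOn.congr (fun z hz ↦ ((hquot z hz w hw).differentiableAt.fun_comp' z
      (f := fun z ↦ (z, w)) (by fun_prop)).differentiableWithinAt) fun z hz ↦ heq z hz w hw
  · exact (hW z hz).1.analyticOnNhd.differentiableOn.diffContOnCl_ball subset_rfl

theorem isUnitMulPowAt_of_roots_eq (hr : 0 < r)
    (hf : ∀ w ∈ closedBall c r, AnalyticAt ℂ f (z₀, w)) (hf₀ : f (z₀, c) = 0)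
    (hm : AnalyticAt ℂ m z₀)
    (h : ∀ᶠ z in 𝓝 z₀, IsRootFactorization (fun w ↦ f (z, w)) c r (fun _ : Fin k ↦ m z) (g z)) :
    IsUnitMulPowAt f k (z₀, c) := by
  have hc := mem_closedBall_self (x := c) hr.le
  have hg₀ : g z₀ c ≠ 0 := h.self_of_nhds.ne_zero c hc
  have hm₀ : c - m z₀ = 0 := by
    have hprod := (h.self_of_nhds.eq hc).symm.trans hf₀
    exact eq_zero_of_pow_eq_zero (n := k) (by simpa [hg₀] using hprod)
  have hmem : ∀ᶠ z in 𝓝 z₀, m z ∈ ball c r :=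
    hm.continuousAt.eventually_mem (isOpen_ball.mem_nhds (by simp [← sub_eq_zero.1 hm₀, hr]))
  have hm' : AnalyticAt ℂ (fun q : ℂ × ℂ ↦ m q.1) (z₀, c) :=
    AnalyticAt.fun_comp (f := Prod.fst) hm analyticAt_fst
  refine ⟨fun q ↦ g q.1 q.2, fun q ↦ q.2 - m q.1, analyticAt_uncurry_unit hr hf hm h hmem,
    analyticAt_snd.sub hm', hg₀, hm₀, fun hd ↦ ?_, ?_⟩
  · have hslice := deriv_mk_left_eq_fderiv (f := fun q ↦ q.2 - m q.1) (p := (z₀, c))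
      (analyticAt_snd.sub hm').differentiableAt
    simp [hd] at hslice
  · filter_upwards [h.prod_nhds (ball_mem_nhds c hr)] with q ⟨hq, hqw⟩
    rw [hq.eq (ball_subset_closedBall hqw)]
    simp [mul_comm]

end UnitTimesPower

section Integrability

lemma exists_mul_norm_sub_pow_le_norm_sub {ι : Type*} [Fintype ι] {a : ℂ → ι → ℂ} {z₀ : ℂ} {j : ℕ}
    (hj : 1 ≤ j) (hq : AnalyticAt ℂ (fun z ↦ centralPowerSum (a z) j) z₀)
    (hne : ¬ ∀ᶠ z in 𝓝 z₀, centralPowerSum (a z) j = 0) :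
    ∃ κ > 0, ∃ N : ℕ, ∀ᶠ z in 𝓝 z₀, z ≠ z₀ → ∀ w, ∃ i, κ * ‖z - z₀‖ ^ N ≤ ‖w - a z i‖ := by
  obtain ⟨δ, hδ, N, hlow⟩ := exists_mul_norm_sub_pow_le_norm hq hne
  have hcont : ContinuousAt (fun κ : ℝ ↦ Fintype.card ι * (2 * κ) ^ j) 0 := by fun_prop
  have hsmall : ∀ᶠ κ : ℝ in 𝓝[>] 0, Fintype.card ι * (2 * κ) ^ j < δ :=
    (hcont.eventually_lt_const (by simpa [Nat.one_le_iff_ne_zero.1 hj] using hδ)).filter_mono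
      nhdsWithin_le_nhds
  obtain ⟨κ, hκδ, hκ⟩ := (hsmall.and self_mem_nhdsWithin).exists
  refine ⟨κ, hκ, N, ?_⟩
  filter_upwards [hlow, closedBall_mem_nhds z₀ one_pos] with z hz hz₁ hne w
  rw [mem_closedBall, dist_eq_norm] at hz₁
  have hpos : 0 < ‖z - z₀‖ := norm_pos_iff.2 (sub_ne_zero.2 hne)
  refine exists_le_norm_sub_of_lt_norm_centralPowerSum (j := j) (lt_of_lt_of_le ?_ hz) w
  calc Fintype.card ι * (2 * (κ * ‖z - z₀‖ ^ N)) ^ j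
      = Fintype.card ι * (2 * κ) ^ j * (‖z - z₀‖ ^ N) ^ j := by ring
    _ ≤ Fintype.card ι * (2 * κ) ^ j * ‖z - z₀‖ ^ N := by
      gcongr
      exact pow_le_of_le_one (by positivity) (pow_le_one₀ hpos.le hz₁) (by omega)
    _ < δ * ‖z - z₀‖ ^ N := by gcongr

theorem IsRootFactorization.norm_rpow_neg_le {F g : ℂ → ℂ} {c w : ℂ} {r : ℝ} {ι : Type*}
    [Fintype ι] {a : ι → ℂ} (h : IsRootFactorization F c r a g) (hw : w ∈ closedBall c r)
    {ν X s p : ℝ} (hν : 0 < ν) (hg : ν ≤ ‖g w‖) (hX : 0 < X) {t : ι} (hXt : X ≤ ‖w - a t‖)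
    (hs : 0 < s) (hsp : s ≤ p) :
    ‖F w‖ ^ (-p) ≤ ν ^ (-p) * X ^ (-s) * ∑ i, ‖w - a i‖ ^ (-(p * Fintype.card ι - s)) := by
  calc ‖F w‖ ^ (-p) = ‖g w‖ ^ (-p) * (∏ i, ‖w - a i‖) ^ (-p) := by
        rw [h.eq hw, norm_mul, norm_prod, mul_comm, Real.mul_rpow (by positivity) (by positivity)]
    _ ≤ ν ^ (-p) * (X ^ (-s) * ∑ i, ‖w - a i‖ ^ (-(p * Fintype.card ι - s))) := by
        gcongr ?_ * ?_
        · exact Real.rpow_le_rpow_of_nonpos hν hg (by linarith)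
        · exact prod_rpow_neg_le_mul_sum (fun _ ↦ norm_nonneg _) hX hXt hs hsp
    _ = _ := by ring

variable {f : ℂ × ℂ → ℂ} {z₀ c : ℂ} {r : ℝ} {ι : Type*} [Fintype ι] {a : ℂ → ι → ℂ}
  {g : ℂ → ℂ → ℂ}

lemma exists_pos_eventually_le_norm_unit (hr : 0 < r)
    (hf : ∀ w ∈ sphere c r, AnalyticAt ℂ f (z₀, w))
    (h : ∀ᶠ z in 𝓝 z₀, IsRootFactorization (fun w ↦ f (z, w)) c r (a z) (g z)) :
    ∃ ν > 0, ∀ᶠ z in 𝓝 z₀, ∀ w ∈ closedBall c r, ν ≤ ‖g z w‖ := by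
  obtain ⟨μ, hμ, hfμ⟩ := exists_pos_eventually_forall_le_norm_of_isCompact (isCompact_sphere c r)
    (fun w hw ↦ (hf w hw).continuousAt) fun w hw ↦ h.self_of_nhds.apply_ne_zero hw
  refine ⟨μ / (2 * r) ^ Fintype.card ι, by positivity, ?_⟩
  filter_upwards [h, hfμ] with z hz hμz w hw
  exact hz.le_norm_unit hr hμ hμz hw

theorem integrableAtFilter_norm_rpow_neg (hr : 0 < r)
    (hf : ∀ w ∈ closedBall c r, AnalyticAt ℂ f (z₀, w))
    (h : ∀ᶠ z in 𝓝 z₀, IsRootFactorization (fun w ↦ f (z, w)) c r (a z) (g z))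
    {κ s p : ℝ} {N : ℕ} (hκ : 0 < κ)
    (hfar : ∀ᶠ z in 𝓝 z₀, z ≠ z₀ → ∀ w, ∃ i, κ * ‖z - z₀‖ ^ N ≤ ‖w - a z i‖)
    (hs : 0 < s) (hsp : s ≤ p) (hNs : N * s < 2) (hps : p * Fintype.card ι - s < 2) :
    IntegrableAtFilter (fun q ↦ ‖f q‖ ^ (-p)) (𝓝 (z₀, c)) := by
  obtain ⟨ν, hν, hgν⟩ := exists_pos_eventually_le_norm_unit hr
    (fun w hw ↦ hf w (sphere_subset_closedBall hw)) h
  have hf_near : ∀ᶠ z in 𝓝 z₀, ∀ w ∈ closedBall c r, AnalyticAt ℂ f (z, w) :=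
    (isCompact_closedBall c r).eventually_forall_of_forall_eventually fun w hw ↦
      (hf w hw).eventually_analyticAt
  obtain ⟨ρ, hρ, hball⟩ := eventually_nhds_iff_ball.1 (h.and (hgν.and (hfar.and hf_near)))
  refine ⟨ball z₀ ρ ×ˢ ball c r, prod_mem_nhds (ball_mem_nhds _ hρ) (ball_mem_nhds _ hr), ?_⟩
  have hcont : ContinuousOn f (ball z₀ ρ ×ˢ ball c r) := fun q hq ↦
    ((hball q.1 hq.1).2.2.2 q.2 (ball_subset_closedBall hq.2)).continuousAt.continuousWithinAt
  have hmeas : AEStronglyMeasurable (fun q ↦ ‖f q‖ ^ (-p))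
      (volume.restrict (ball z₀ ρ ×ˢ ball c r)) :=
    ((hcont.aemeasurable (isOpen_ball.prod isOpen_ball).measurableSet).norm.pow_const
      _).aestronglyMeasurable
  rw [Measure.volume_eq_prod] at hmeas ⊢
  refine integrableOn_prod_ball_of_norm_le (α := N * s) (e := p * Fintype.card ι - s)
    (A := ν ^ (-p) * κ ^ (-s)) (by simpa using hNs) (by simpa using hps) hmeas
    (fun z hz ↦ (hball z hz).1.root_mem) fun z hz hne w hw ↦ ?_
  obtain ⟨hfactor, hg, hfar, -⟩ := hball z hz
  have hpos : 0 < ‖z - z₀‖ := norm_pos_iff.2 (sub_ne_zero.2 hne)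
  obtain ⟨t, ht⟩ := hfar hne w
  have hw' := ball_subset_closedBall hw
  have hX : (κ * ‖z - z₀‖ ^ N) ^ (-s) = κ ^ (-s) * ‖z - z₀‖ ^ (-(N * s)) := by
    rw [Real.mul_rpow hκ.le (by positivity), ← Real.rpow_natCast, ← Real.rpow_mul hpos.le,
      mul_neg]
  rw [Real.norm_of_nonneg (by positivity), mul_assoc (ν ^ (-p)), ← hX]
  exact hfactor.norm_rpow_neg_le hw' hν (hg w hw') (by positivity) ht hs hsp

theorem isUnitMulPowAt_or_exists_integrableAtFilter {k : ℕ} (hk : 1 ≤ k)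
    (hf : AnalyticAt ℂ f (z₀, c)) (horder : analyticOrderAt (fun w ↦ f (z₀, w)) c = k) :
    IsUnitMulPowAt f k (z₀, c) ∨
      ∃ p : ℝ, 2 / k < p ∧ IntegrableAtFilter (fun q ↦ ‖f q‖ ^ (-p)) (𝓝 (z₀, c)) := by
  obtain ⟨r, hr, hf_disc, a, g, h⟩ := exists_isRootFactorization_family hf horder
  have hf_sphere : ∀ w ∈ sphere c r, AnalyticAt ℂ f (z₀, w) := fun w hw ↦
    hf_disc w (sphere_subset_closedBall hw)
  by_cases hQ : ∀ j ∈ Finset.Icc 1 k, ∀ᶠ z in 𝓝 z₀, centralPowerSum (a z) j = 0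
  · refine .inl (isUnitMulPowAt_of_roots_eq (g := g) hr hf_disc ?_
      (analyticAt_barycentre_roots hr.le hf_sphere h) ?_)
    · exact apply_eq_zero_of_analyticOrderAt_ne_zero (f := fun w ↦ f (z₀, w))
        (by simpa [horder] using Nat.one_le_iff_ne_zero.1 hk)
    · filter_upwards [h, (eventually_all_finset _).2 hQ] with z hz hQz
      rwa [← funext (eq_barycentre_of_forall_centralPowerSum_eq_zero (by simpa using hQz))]
  · push Not at hQ
    obtain ⟨j, hj, hjQ⟩ := hQ
    obtain ⟨κ, hκ, N, hfar⟩ := exists_mul_norm_sub_pow_le_norm_sub (Finset.mem_Icc.1 hj).1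
      (analyticAt_centralPowerSum_roots hr.le hf_sphere h j) (by simpa using hjQ)
    obtain ⟨s, p, hs, hsp, hNs, hkp, hps⟩ := exists_two_div_lt_and_mul_sub_lt_two hk N
    exact .inr ⟨p, hkp, integrableAtFilter_norm_rpow_neg hr hf_disc h hκ hfar hs hsp hNs
      (by simpa using hps)⟩

end Integrability

section LinearCoordinates

lemma integrableAtFilter_nhds_of_comp_continuousLinearEquiv {E G : Type*} [NormedAddCommGroup E]
    [NormedSpace ℝ E] [FiniteDimensional ℝ E] [MeasurableSpace E] [BorelSpace E]
    [NormedAddCommGroup G] {μ : Measure E} [μ.IsAddHaarMeasure] (L : E ≃L[ℝ] E) {u : E → G} {x : E}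
    (h : IntegrableAtFilter (u ∘ L) (𝓝 x) μ) : IntegrableAtFilter u (𝓝 (L x)) μ := by
  obtain ⟨s, hs, hus⟩ := h
  have : ProperSpace E := FiniteDimensional.proper_real E
  have hpre : L ⁻¹' (L '' s) = s := L.injective.preimage_image s
  have hint : IntegrableOn u (L '' s) (μ.map L) :=
    (integrableOn_map_equiv L.toHomeomorph.toMeasurableEquiv).2 (by simpa [hpre] using hus)
  refine ⟨L '' s, L.toHomeomorph.isOpenMap.image_mem_nhds hs, ?_⟩
  rw [Measure.isAddLeftInvariant_eq_smul μ (μ.map L), IntegrableOn, Measure.restrict_smul]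
  exact Integrable.smul_measure_nnreal hint

variable {𝕜 E F : Type*} [NontriviallyNormedField 𝕜] [NormedAddCommGroup E]
  [NormedSpace 𝕜 E] [NormedAddCommGroup F] [NormedSpace 𝕜 F]

lemma exists_apply_diagonal_ne_zero_of_apply_comp_perm_eq [CharZero 𝕜] {k : ℕ}
    {M : ContinuousMultilinearMap 𝕜 (fun _ : Fin k ↦ E) F}
    (hsymm : ∀ (σ : Equiv.Perm (Fin k)) v, M (v ∘ σ) = M v) (hM : M ≠ 0) :
    ∃ v : E, M (fun _ ↦ v) ≠ 0 := by
  by_contra! hdiag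
  refine hM (ContinuousMultilinearMap.ext fun v ↦ ?_)
  have hpolar := M.iteratedFDeriv_comp_diagonal 0 v
  have hsum : ∑ σ : Equiv.Perm (Fin k), M (fun i ↦ v (σ i)) = (k.factorial : 𝕜) • M v := by
    simp [show ∀ σ : Equiv.Perm (Fin k), M (fun i ↦ v (σ i)) = M v from fun σ ↦ hsymm σ v,
      Fintype.card_perm, Nat.cast_smul_eq_nsmul]
  rw [funext hdiag, iteratedFDeriv_fun_zero, hsum] at hpolar
  exact (smul_eq_zero.1 hpolar.symm).resolve_left (Nat.cast_ne_zero.2 k.factorial_ne_zero)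

variable [CompleteSpace F]

lemma iteratedDeriv_comp_add_smul {f : E → F} {x : E} (hf : AnalyticAt 𝕜 f x) (n : ℕ) (v : E) :
    iteratedDeriv n (fun t : 𝕜 ↦ f (x + t • v)) 0 = iteratedFDeriv 𝕜 n f x (fun _ ↦ v) := by
  obtain ⟨p, R, hp⟩ : AnalyticAt 𝕜 (fun y ↦ f (x + y)) 0 := AnalyticAt.fun_comp (g := f)
    (f := fun y ↦ x + y) (by simpa using hf) (analyticAt_const.add analyticAt_id)
  set ℓ : 𝕜 →L[𝕜] E := ContinuousLinearMap.toSpanSingleton 𝕜 v with hℓ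
  have hline : HasFPowerSeriesOnBall (fun y ↦ f (x + y)) p (ℓ 0) R := by simpa using hp
  have hcomp : iteratedDeriv n ((fun y ↦ f (x + y)) ∘ ℓ) 0 = n.factorial • p n (fun _ ↦ v) := by
    rw [iteratedDeriv_eq_iteratedFDeriv, ← hline.compContinuousLinearMap.factorial_smul 1 n]
    rw [FormalMultilinearSeries.compContinuousLinearMap_apply]
    simp [hℓ, Function.comp_def]
  rw [hp.factorial_smul, iteratedFDeriv_comp_add_left, add_zero] at hcomp
  exact hcomp

theorem exists_analyticOrderAt_add_smul_eq [CharZero 𝕜] {f : E → F} {x : E}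
    (hf : AnalyticAt 𝕜 f x) {k : ℕ}
    (horder_lt : ∀ j < k, iteratedFDeriv 𝕜 j f x = 0) (horder_ne : iteratedFDeriv 𝕜 k f x ≠ 0) :
    ∃ v : E, analyticOrderAt (fun t : 𝕜 ↦ f (x + t • v)) 0 = k := by
  obtain ⟨v, hv⟩ := exists_apply_diagonal_ne_zero_of_apply_comp_perm_eq
    (fun σ v ↦ hf.contDiffAt.iteratedFDeriv_comp_perm v σ) horder_ne
  have hline : AnalyticAt 𝕜 (fun t : 𝕜 ↦ f (x + t • v)) 0 := AnalyticAt.fun_comp (g := f)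
    (f := fun t : 𝕜 ↦ x + t • v) (by simpa using hf) (by fun_prop)
  refine ⟨v, (analyticOrderAt_eq_nat_iff_iteratedDeriv_eq_zero hline).2 ⟨fun j hj ↦ ?_, ?_⟩⟩
  · simp [iteratedDeriv_comp_add_smul hf, horder_lt j hj]
  · rwa [iteratedDeriv_comp_add_smul hf]

theorem exists_continuousLinearEquiv_analyticOrderAt_eq {f : ℂ × ℂ → ℂ} (hf : AnalyticAt ℂ f 0)
    {k : ℕ} (hk : 1 ≤ k) (horder_lt : ∀ j < k, iteratedFDeriv ℂ j f 0 = 0)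
    (horder_ne : iteratedFDeriv ℂ k f 0 ≠ 0) :
    ∃ L : (ℂ × ℂ) ≃L[ℂ] (ℂ × ℂ), analyticOrderAt (fun w ↦ (f ∘ L) (0, w)) 0 = k := by
  obtain ⟨v, hv⟩ := exists_analyticOrderAt_add_smul_eq hf horder_lt horder_ne
  have hf₀ : f 0 = 0 := by
    simpa using DFunLike.congr_fun (horder_lt 0 hk) 0
  have hv₀ : v ≠ 0 := by
    rintro rfl
    simp [hf₀, analyticOrderAt_eq_top.2] at hv
  obtain ⟨L, hL⟩ := SeparatingDual.exists_continuousLinearEquiv_apply_eq (R := ℂ)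
    (x := ((0 : ℂ), (1 : ℂ))) (by simp) hv₀
  refine ⟨L, ?_⟩
  have hline : ∀ w : ℂ, L (0, w) = 0 + w • v := fun w ↦ by
    rw [← hL, ← map_smul, zero_add, Prod.smul_mk, smul_zero, smul_eq_mul, mul_one]
  simpa only [Function.comp_apply, hline] using hv

end LinearCoordinates

/-- Equality case of Lemma 4.3: if `f` is holomorphic near `0 ∈ ℂ²`, not identically
zero near `0`, with vanishing order `k ≥ 1` at `0`, and its complex singularity
exponent at `0` equals `1/k` (i.e. for every `c > 1/k` the function `‖f‖ ^ (-2c)`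
fails to be integrable on every open neighborhood of `0`), then locally
`f = g * h ^ k` with `g` holomorphic nonvanishing at `0` and `h` holomorphic of
vanishing order exactly `1` at `0`. -/
theorem factorization_of_extremal_singularity
    (f : ℂ × ℂ → ℂ) (U : Set (ℂ × ℂ)) (hU : IsOpen U) (h0U : (0 : ℂ × ℂ) ∈ U)
    (hf : DifferentiableOn ℂ f U)
    (hnz : ¬ ∀ᶠ z in nhds (0 : ℂ × ℂ), f z = 0)
    (k : ℕ) (hk : 1 ≤ k)
    (horder_lt : ∀ j < k, iteratedFDeriv ℂ j f 0 = 0)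
    (horder_ne : iteratedFDeriv ℂ k f 0 ≠ 0)
    (hext : ∀ c : ℝ, 1 / (k : ℝ) < c →
      ∀ V : Set (ℂ × ℂ), IsOpen V → (0 : ℂ × ℂ) ∈ V →
        ¬ IntegrableOn (fun z => ‖f z‖ ^ (-(2 * c))) V volume) :
    ∃ (V : Set (ℂ × ℂ)) (g h : ℂ × ℂ → ℂ),
      IsOpen V ∧ (0 : ℂ × ℂ) ∈ V ∧
      DifferentiableOn ℂ g V ∧ DifferentiableOn ℂ h V ∧
      g 0 ≠ 0 ∧ h 0 = 0 ∧ iteratedFDeriv ℂ 1 h 0 ≠ 0 ∧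
      ∀ z ∈ V, f z = g z * h z ^ k := by
  have hf₀ : AnalyticAt ℂ f 0 := analyticOnNhd_of_differentiableOn_prod hU hf 0 h0U
  obtain ⟨L, hL⟩ := exists_continuousLinearEquiv_analyticOrderAt_eq hf₀ hk horder_lt horder_ne
  have hL₀ : L (0, 0) = 0 := map_zero L
  have hfL : AnalyticAt ℂ (f ∘ L) (0, 0) := AnalyticAt.comp (by rwa [hL₀]) (L.analyticAt _)
  rcases isUnitMulPowAt_or_exists_integrableAtFilter hk hfL hL with hfactor | ⟨p, hp, hint⟩
  · have hfactor' : IsUnitMulPowAt ((f ∘ L) ∘ L.symm) k 0 :=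
      IsUnitMulPowAt.comp_continuousLinearEquiv L.symm (by rwa [map_zero])
    rw [Function.comp_assoc, L.self_comp_symm, Function.comp_id] at hfactor'
    exact hfactor'.exists_isOpen
  · have : (volume : Measure (ℂ × ℂ)).IsAddHaarMeasure :=
      inferInstanceAs ((volume : Measure ℂ).prod volume).IsAddHaarMeasure
    obtain ⟨s, hs, hfs⟩ := integrableAtFilter_nhds_of_comp_continuousLinearEquiv
      (u := fun q ↦ ‖f q‖ ^ (-p)) (L.restrictScalars ℝ) hint
    obtain ⟨V, hVs, hV, h0V⟩ := _root_.mem_nhds_iff.1 hs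
    have hkp : 1 / (k : ℝ) < p / 2 := by rw [lt_div_iff₀' two_pos, mul_one_div]; exact hp
    refine absurd (hfs.mono_set hVs) ?_
    simpa only [mul_div_cancel₀ p (two_ne_zero' ℝ)] using hext (p / 2) hkp V hV (hL₀ ▸ h0V)
end
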